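/- arXiv:1011.6401 — 2 statements merged into one kernel-verified Lean document; each statement's English description precedes it below -/
import Mathlib

section
/- Consider the vacuum plane wave metric on ℝ⁴ given by the pp-wave metric with 2H = y² − z². Then the real vector space of Killing tensors of g has dimension exactly 22, and its subspace of reducible Killing tensors has dimension exactly 21. -/
noncomputable section

/-- Points of (an open subset of) `ℝ⁴`, with coordinates `(u,v,y,z)` indexed by `0,1,2,3`. -/
abbrev Pt : Type := Fin 4 → ℝ

/-- Partial derivative of a function in the `i`-th coordinate direction. -/
def pd (i : Fin 4) (f : Pt → ℝ) (p : Pt) : ℝ :=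
  fderiv ℝ f p (Pi.single i 1)

/-- Kronecker delta `δ^i_a`. -/
def kd (i a : Fin 4) : ℝ := if i = a then 1 else 0

/-- Symmetrized product of Kronecker deltas, `δ_{(a}^i δ_{b)}^j`. -/
def sd (i j a b : Fin 4) : ℝ := (kd i a * kd j b + kd j a * kd i b) / 2

/-- Components of the pp-wave metric `g = -2 du dv - 2H du² + dy² + dz²`. -/
def ppMetric (H : Pt → ℝ) (p : Pt) (a b : Fin 4) : ℝ :=
  if a = 0 ∧ b = 0 then -2 * H p
  else if (a = 0 ∧ b = 1) ∨ (a = 1 ∧ b = 0) then -1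
  else if (a = 2 ∧ b = 2) ∨ (a = 3 ∧ b = 3) then 1
  else 0

/-- Christoffel symbols `Γ^d_{ab}` of the pp-wave metric:
`Γ^v_{uu} = H_{,u}`, `Γ^y_{uu} = Γ^v_{uy} = Γ^v_{yu} = H_{,y}`,
`Γ^z_{uu} = Γ^v_{uz} = Γ^v_{zu} = H_{,z}`, all others zero. -/
def Gamma (H : Pt → ℝ) (p : Pt) (d a b : Fin 4) : ℝ :=
  if d = 1 ∧ a = 0 ∧ b = 0 then pd 0 H p
  else if (d = 2 ∧ a = 0 ∧ b = 0) ∨ (d = 1 ∧ ((a = 0 ∧ b = 2) ∨ (a = 2 ∧ b = 0))) then pd 2 H p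
  else if (d = 3 ∧ a = 0 ∧ b = 0) ∨ (d = 1 ∧ ((a = 0 ∧ b = 3) ∨ (a = 3 ∧ b = 0))) then pd 3 H p
  else 0

/-- Covariant derivative of a covector field: `∇_a X_b = ∂_a X_b - Γ^d_{ab} X_d`. -/
def covD1 (H : Pt → ℝ) (X : Pt → Fin 4 → ℝ) (p : Pt) (a b : Fin 4) : ℝ :=
  pd a (fun q => X q b) p - ∑ d, Gamma H p d a b * X p d

/-- Covariant derivative of a 2-tensor field:
`∇_c T_{ab} = ∂_c T_{ab} - Γ^d_{ca} T_{db} - Γ^d_{cb} T_{ad}`. -/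
def covD2 (H : Pt → ℝ) (T : Pt → Fin 4 → Fin 4 → ℝ) (p : Pt) (c a b : Fin 4) : ℝ :=
  pd c (fun q => T q a b) p - ∑ d, Gamma H p d c a * T p d b
    - ∑ d, Gamma H p d c b * T p a d

/-- A Killing vector of the pp-wave metric on `U`, given by its covariant components:
a smooth covector field with `∇_{(a}X_{b)} = 0` on `U`. -/
def IsKillingVector (H : Pt → ℝ) (U : Set Pt) (X : Pt → Fin 4 → ℝ) : Prop :=
  (∀ a, ContDiffOn ℝ (⊤ : ℕ∞) (fun p => X p a) U) ∧
  ∀ p ∈ U, ∀ a b, covD1 H X p a b + covD1 H X p b a = 0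

/-- A (second order) Killing tensor of the pp-wave metric on `U`: a smooth symmetric
2-tensor field with `∇_{(c}K_{ab)} = 0` on `U`. -/
def IsKillingTensor (H : Pt → ℝ) (U : Set Pt) (K : Pt → Fin 4 → Fin 4 → ℝ) : Prop :=
  (∀ a b, ContDiffOn ℝ (⊤ : ℕ∞) (fun p => K p a b) U) ∧
  (∀ p a b, K p a b = K p b a) ∧
  ∀ p ∈ U, ∀ a b c,
    covD2 H K p c a b + covD2 H K p a b c + covD2 H K p b c a = 0

/-- A Killing tensor is reducible if (on `U`) it is a constant-coefficient linear combination
of the metric `g_{ab}` and finitely many symmetrized products `X_{(a}Y_{b)}` of Killing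
vectors `X`, `Y`. -/
def IsReducible (H : Pt → ℝ) (U : Set Pt) (K : Pt → Fin 4 → Fin 4 → ℝ) : Prop :=
  ∃ (c₀ : ℝ) (n : ℕ) (c : Fin n → ℝ) (X Y : Fin n → Pt → Fin 4 → ℝ),
    (∀ i, IsKillingVector H U (X i)) ∧ (∀ i, IsKillingVector H U (Y i)) ∧
    ∀ p ∈ U, ∀ a b, K p a b =
      c₀ * ppMetric H p a b + ∑ i, c i * ((X i p a * Y i p b + X i p b * Y i p a) / 2)

/-!
Affinely reparametrised, a geodesic transverse to the wave fronts has `u`-velocity `1`, and such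
geodesics form a flow on a seven-dimensional phase space. Contracting with the velocity, `X_a ẋᵃ`
and `K_{ab} ẋᵃ ẋᵇ`, is injective on covectors and on symmetric tensors by polarization, and
identifies Killing vectors and Killing tensors with first integrals of the flow which are affine,
respectively quadratic, in the remaining velocities.

Let `F` be such a quadratic integral. Its third derivatives in the velocities vanish; commuting the
flow derivative past these equations repeatedly shows that all third derivatives of `F` in
directions other than `u` vanish, and that `∂_v F` is constant. Since `F` is constant along the
explicit geodesics, it is determined by its second order Taylor polynomial on the slice `u = 0`. So
`F` is a multiple of one integral that is affine in `v`, plus a quadratic form in the six integrals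
linear in the velocity, one for each Killing vector: `1 + 21 = 22` parameters. The charge `f` of a
Killing vector does not depend on `v`, as `f` and `f²` are both affine in `v`; hence the reducible
Killing tensors correspond exactly to the 21 dimensions of quadratic forms.
-/

/-! ### Smooth functions on a normed space -/

section SmoothFun

open scoped Manifold ContDiff

variable {E : Type*} [NormedAddCommGroup E] [NormedSpace ℝ E]

/-- The algebra of smooth real functions on a normed space. -/
abbrev SmoothFun (E : Type*) [NormedAddCommGroup E] [NormedSpace ℝ E] : Type _ :=
  C^∞⟮𝓘(ℝ, E), E; ℝ⟯

namespace SmoothFun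

protected theorem contDiff (f : SmoothFun E) : ContDiff ℝ ∞ f :=
  f.contMDiff.contDiff

protected theorem differentiable (f : SmoothFun E) : Differentiable ℝ f :=
  f.contDiff.differentiable (by simp)

/-- A smooth function `f : E → ℝ` as an element of the algebra of smooth functions. -/
def ofContDiff (f : E → ℝ) (hf : ContDiff ℝ ∞ f) : SmoothFun E :=
  ⟨f, hf.contMDiff⟩

@[simp] protected theorem sum_apply {ι : Type*} (s : Finset ι) (f : ι → SmoothFun E) (x : E) :
    (∑ i ∈ s, f i) x = ∑ i ∈ s, f i x :=
  map_sum (ContMDiffMap.evalRingHom x) f s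

@[simp] theorem ofNat_apply (n : ℕ) [n.AtLeastTwo] (x : E) :
    (ofNat(n) : SmoothFun E) x = ofNat(n) :=
  map_ofNat (ContMDiffMap.evalRingHom x) n

@[simp] theorem ofContDiff_apply (f : E → ℝ) (hf : ContDiff ℝ ∞ f) (x : E) :
    ofContDiff f hf x = f x :=
  rfl

instance : IsAddTorsionFree (SmoothFun E) :=
  have := Module.compHom (SmoothFun E) (algebraMap ℚ ℝ)
  .of_module_rat _

/-- The derivative in a fixed direction, as a derivation of the algebra of smooth functions. -/
def dirDeriv (w : E) : Derivation ℝ (SmoothFun E) (SmoothFun E) :=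
  Derivation.mk'
    { toFun f := ofContDiff (fun x ↦ fderiv ℝ f x w)
        ((f.contDiff.fderiv_right le_rfl).clm_apply contDiff_const)
      map_add' f g := by
        ext x
        exact DFunLike.congr_fun (fderiv_add (f.differentiable x) (g.differentiable x)) w
      map_smul' c f := by
        ext x
        exact DFunLike.congr_fun (fderiv_const_smul (f.differentiable x) c) w }
    fun f g ↦ by
      ext x
      exact DFunLike.congr_fun (fderiv_mul (f.differentiable x) (g.differentiable x)) w

theorem dirDeriv_apply (w : E) (f : SmoothFun E) (x : E) : dirDeriv w f x = fderiv ℝ f x w :=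
  rfl

theorem dirDeriv_comm (v w : E) (f : SmoothFun E) :
    dirDeriv v (dirDeriv w f) = dirDeriv w (dirDeriv v f) := by
  have second (v w x : E) : dirDeriv v (dirDeriv w f) x = fderiv ℝ (fderiv ℝ f) x v w := by
    have differentiableAt : DifferentiableAt ℝ (fderiv ℝ f) x :=
      (f.contDiff.fderiv_right (m := ∞) le_rfl).differentiable (by simp) x
    have chain := differentiableAt.hasFDerivAt.clm_apply (hasFDerivAt_const w x)
    exact (DFunLike.congr_fun chain.fderiv v).trans (by simp)
  ext x
  rw [second, second]
  exact (f.contDiff.contDiffAt.isSymmSndFDerivAt (by simp [← WithTop.coe_ofNat])) v w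

theorem hasDerivAt_comp {γ : ℝ → E} {w : E} {t : ℝ} (f : SmoothFun E) (hγ : HasDerivAt γ w t) :
    HasDerivAt (fun s ↦ f (γ s)) (dirDeriv w f (γ t)) t :=
  (f.differentiable _).hasFDerivAt.comp_hasDerivAt t hγ

theorem taylor_quadratic {f : SmoothFun E} {w : E}
    (hf : dirDeriv w (dirDeriv w (dirDeriv w f)) = 0) (x : E) :
    f (x + w) = f x + dirDeriv w f x + dirDeriv w (dirDeriv w f) x / 2 := by
  have line (t : ℝ) : HasDerivAt (fun s : ℝ ↦ x + s • w) w t := by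
    simpa using ((hasDerivAt_id t).smul_const w).const_add x
  have taylor_constant (t : ℝ) :
      HasDerivAt (fun s ↦ f (x + s • w) + (1 - s) * dirDeriv w f (x + s • w) +
        (1 - s) ^ 2 / 2 * dirDeriv w (dirDeriv w f) (x + s • w)) 0 t := by
    have lin : HasDerivAt (fun s : ℝ ↦ 1 - s) (-1) t := by
      simpa using (hasDerivAt_id t).const_sub 1
    convert! ((f.hasDerivAt_comp (line t)).add
      (lin.mul ((dirDeriv w f).hasDerivAt_comp (line t)))).add
      (((lin.pow 2).div_const 2).mul ((dirDeriv w (dirDeriv w f)).hasDerivAt_comp (line t))) using 1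
    simp [hf]
    ring
  have endpoints := is_const_of_deriv_eq_zero (fun t ↦ (taylor_constant t).differentiableAt)
    (fun t ↦ (taylor_constant t).deriv) 1 0
  simpa [div_eq_inv_mul] using endpoints

@[simp] theorem derivation_map_ofNat (D : Derivation ℝ (SmoothFun E) (SmoothFun E)) (n : ℕ)
    [n.AtLeastTwo] : D ofNat(n) = 0 := by
  simpa only [Nat.cast_ofNat] using D.map_natCast (OfNat.ofNat n)

end SmoothFun

end SmoothFun

/-! ### Polarization of homogeneous polynomials -/

section Polarization

open MvPolynomial

variable {σ 𝕜 : Type*} [Field 𝕜]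

theorem eval_smul_of_isHomogeneous {P : MvPolynomial σ 𝕜} {n : ℕ} (hP : P.IsHomogeneous n)
    (c : 𝕜) (x : σ → 𝕜) : eval (c • x) P = c ^ n * eval x P := by
  rw [eval_eq, eval_eq, Finset.mul_sum]
  refine Finset.sum_congr rfl fun d hd ↦ ?_
  rw [hP.degree_eq_sum_deg_support hd]
  simp only [Pi.smul_apply, smul_eq_mul, mul_pow, Finset.prod_mul_distrib,
    Finset.prod_pow_eq_pow_sum]
  ring

theorem linearIndependent_sym2_mul_X :
    LinearIndependent 𝕜 fun s : Sym2 σ ↦ (s.map (X : σ → MvPolynomial σ 𝕜)).mul := by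
  classical
  let degree (s : Sym2 σ) : σ →₀ ℕ := Multiset.toFinsupp (Sym2.equivMultiset σ s).1
  have degree_injective : Function.Injective degree :=
    Multiset.toFinsupp.injective.comp <|
      Subtype.val_injective.comp (Sym2.equivMultiset σ).injective
  have eq_monomial (s : Sym2 σ) :
      (s.map (X : σ → MvPolynomial σ 𝕜)).mul = basisMonomials σ 𝕜 (degree s) := by
    induction s with | _ a b
    have : degree s(a, b) = .single a 1 + .single b 1 :=
      (Multiset.toFinsupp.map_add {a} {b}).trans (by simp)
    simp [this, X, monomial_mul]
  simp only [eq_monomial]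
  exact (basisMonomials σ 𝕜).linearIndependent.comp degree degree_injective

theorem eq_zero_of_isHomogeneous [Infinite 𝕜] {P : MvPolynomial σ 𝕜} {n : ℕ}
    (hP : P.IsHomogeneous n) (i : σ) (h : ∀ x : σ → 𝕜, x i = 1 → eval x P = 0) : P = 0 := by
  have vanish : P * X i = 0 := by
    refine MvPolynomial.funext fun x ↦ ?_
    obtain hx | hx := eq_or_ne (x i) 0
    · simp [hx]
    · have scale := eval_smul_of_isHomogeneous hP (x i) ((x i)⁻¹ • x)
      rw [smul_inv_smul₀ hx, h ((x i)⁻¹ • x) (inv_mul_cancel₀ hx), mul_zero] at scale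
      simp [scale]
  exact (mul_eq_zero.1 vanish).resolve_right (X_ne_zero i)

variable [Fintype σ] [CharZero 𝕜]

theorem forall_quadratic_eq_zero_iff (M : σ → σ → 𝕜) (i : σ) :
    (∀ x : σ → 𝕜, x i = 1 → ∑ a, ∑ b, M a b * x a * x b = 0) ↔ ∀ a b, M a b + M b a = 0 := by
  classical
  refine ⟨fun h a b ↦ ?_, fun h x _ ↦ ?_⟩
  · have quadratic_eq_zero : ∑ a, ∑ b, C (M a b) * X a * X b = 0 :=
      eq_zero_of_isHomogeneous (n := 2) (.sum _ _ _ fun a _ ↦ .sum _ _ _ fun b _ ↦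
        ((isHomogeneous_C _ _).mul (isHomogeneous_X _ _)).mul (isHomogeneous_X _ _)) i
        (by simpa using h)
    have coeff_eq_zero := congrArg (fun P ↦ constantCoeff (pderiv a (pderiv b P))) quadratic_eq_zero
    simpa [pderiv_X, Pi.single_apply, Finset.sum_add_distrib, add_comm] using coeff_eq_zero
  · refine self_eq_neg.1 ?_
    conv_lhs => rw [Finset.sum_comm]
    simp only [← Finset.sum_neg_distrib, ← neg_mul, ← eq_neg_of_add_eq_zero_left (h _ _),
      mul_right_comm]

theorem sum_sum_sum_rotate {M : Type*} [AddCommMonoid M] (f : σ → σ → σ → M) :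
    ∑ c, ∑ a, ∑ b, f c a b = ∑ a, ∑ b, ∑ c, f c a b := by
  rw [Finset.sum_comm]
  exact Finset.sum_congr rfl fun a _ ↦ Finset.sum_comm

theorem forall_cubic_eq_zero_iff {T : σ → σ → σ → 𝕜} (hT : ∀ a b c, T a b c = T a c b) (i : σ) :
    (∀ x : σ → 𝕜, x i = 1 → ∑ a, ∑ b, ∑ c, T a b c * x a * x b * x c = 0) ↔
      ∀ a b c, T a b c + T b c a + T c a b = 0 := by
  classical
  refine ⟨fun h a b c ↦ ?_, fun h x _ ↦ ?_⟩
  · have cubic_eq_zero : ∑ a, ∑ b, ∑ c, C (T a b c) * X a * X b * X c = 0 :=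
      eq_zero_of_isHomogeneous (n := 3) (.sum _ _ _ fun a _ ↦ .sum _ _ _ fun b _ ↦ .sum _ _ _
        fun c _ ↦ (((isHomogeneous_C _ _).mul (isHomogeneous_X _ _)).mul
          (isHomogeneous_X _ _)).mul (isHomogeneous_X _ _)) i (by simpa using h)
    have coeff_eq_zero :=
      congrArg (fun P ↦ constantCoeff (pderiv a (pderiv b (pderiv c P)))) cubic_eq_zero
    simp [pderiv_X, Pi.single_apply, Finset.sum_add_distrib, mul_add] at coeff_eq_zero
    linear_combination coeff_eq_zero / 2 + (hT a b c + hT b c a + hT c a b) / 2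
  · let f a b c := T a b c * x a * x b * x c
    have cyclic_sum : ∑ a, ∑ b, ∑ c, (f a b c + f b c a + f c a b) = 0 :=
      Finset.sum_eq_zero fun a _ ↦ Finset.sum_eq_zero fun b _ ↦ Finset.sum_eq_zero fun c _ ↦ by
        linear_combination x a * x b * x c * h a b c
    simp only [Finset.sum_add_distrib] at cyclic_sum
    linear_combination (cyclic_sum + sum_sum_sum_rotate f -
      sum_sum_sum_rotate fun c a b ↦ f a b c) / 3

end Polarization

theorem exists_fin_family {ι X α β : Type*} [Fintype ι] {n : ℕ} (hn : Fintype.card ι = n)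
    {b : ι → X → α → β → ℝ} (hb : LinearIndependent ℝ b) {P : (X → α → β → ℝ) → Prop}
    (hP : ∀ {K}, P K ↔ K ∈ Submodule.span ℝ (Set.range b)) :
    ∃ B : Fin n → X → α → β → ℝ, (∀ i, P (B i)) ∧
      (∀ c : Fin n → ℝ, (∀ p ∈ Set.univ, ∀ a b, ∑ i, c i * B i p a b = 0) → c = 0) ∧
      (∀ K, P K → ∃ c : Fin n → ℝ, ∀ p ∈ Set.univ, ∀ a b, K p a b = ∑ i, c i * B i p a b) := by
  let e := (Fintype.equivFinOfCardEq hn).symm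
  refine ⟨b ∘ e, fun i ↦ hP.2 (Submodule.subset_span ⟨e i, rfl⟩), fun c hc ↦ ?_, fun K hK ↦ ?_⟩
  · refine funext (Fintype.linearIndependent_iff.1 (hb.comp e e.injective) c ?_)
    ext p a b
    simpa using hc p trivial a b
  · rw [hP, ← e.surjective.range_comp, Submodule.mem_span_range_iff_exists_fun] at hK
    obtain ⟨c, rfl⟩ := hK
    exact ⟨c, fun p _ a b ↦ by simp⟩

/-! ### The geodesic spray on phase space -/

open SmoothFun
open scoped ContDiff

/-- Labels of coordinates on the seven-dimensional space of geodesic initial data normalised to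
`u`-velocity `1`: the position is `(u, v, x 0, x 1)` with `x 0 = y` and `x 1 = z`, the velocity of
`x i` is `p i`, and `e` replaces the velocity of `v`, which is `e - 2H`. Along a geodesic `e` is
constant. -/
inductive Coord
  | u | v | e | x (i : Fin 2) | p (i : Fin 2)
  deriving DecidableEq, Fintype

/-- The phase space with coordinates `Coord`. -/
abbrev Phase : Type := Coord → ℝ

/-- The coordinate derivation `∂/∂c` on phase space. -/
def partialDeriv (c : Coord) : Derivation ℝ (SmoothFun Phase) (SmoothFun Phase) :=
  dirDeriv (Pi.single c 1)

local notation "∂" => partialDeriv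

/-- The coordinate `c` as a smooth function on phase space. -/
def coord (c : Coord) : SmoothFun Phase :=
  ofContDiff (fun ξ ↦ ξ c) (contDiff_apply ℝ ℝ c)

theorem coord_apply (c : Coord) (ξ : Phase) : coord c ξ = ξ c :=
  rfl

/-- The coefficients of the wave profile `2H = y² - z² = ∑ i, profile i * (x i)²`. -/
def profile (i : Fin 2) : ℝ := ![1, -1] i

/-- The coefficient `profile i` as a constant function on phase space. -/
def κ (i : Fin 2) : SmoothFun Phase :=
  algebraMap ℝ _ (profile i)

theorem κ_sq (i : Fin 2) : κ i * κ i = 1 := by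
  fin_cases i <;> simp [κ, profile]

theorem κ_eq_neg {i j : Fin 2} (hij : i ≠ j) : κ j = -κ i := by
  fin_cases i <;> fin_cases j <;> simp [κ, profile] at hij ⊢

theorem κ_apply (i : Fin 2) (ξ : Phase) : κ i ξ = profile i :=
  rfl

@[simp] theorem partialDeriv_κ (c : Coord) (i : Fin 2) : ∂ c (κ i) = 0 :=
  (∂ c).map_algebraMap _

@[simp] theorem partialDeriv_coord (c d : Coord) : ∂ c (coord d) = if d = c then 1 else 0 := by
  ext ξ
  change fderiv ℝ (fun ξ : Phase ↦ ξ d) ξ (Pi.single c 1) = _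
  rw [(hasFDerivAt_apply d ξ).fderiv]
  obtain rfl | h := eq_or_ne d c <;> simp [*]

theorem partialDeriv_comm (c d : Coord) (f : SmoothFun Phase) : ∂ c (∂ d f) = ∂ d (∂ c f) :=
  dirDeriv_comm _ _ f

/-- The geodesic spray: the derivative along the geodesic flow parametrised by `u`. -/
def spray : Derivation ℝ (SmoothFun Phase) (SmoothFun Phase) :=
  ∂ .u + (coord .e - ∑ i, κ i * coord (.x i) ^ 2) • ∂ .v +
    ∑ i, (coord (.p i) • ∂ (.x i) - (κ i * coord (.x i)) • ∂ (.p i))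

theorem spray_apply (f : SmoothFun Phase) :
    spray f = ∂ .u f + (coord .e - ∑ i, κ i * coord (.x i) ^ 2) * ∂ .v f +
      ∑ i, (coord (.p i) * ∂ (.x i) f - (κ i * coord (.x i)) * ∂ (.p i) f) := by
  simp [spray]

@[simp] theorem spray_coord_x (i : Fin 2) : spray (coord (.x i)) = coord (.p i) := by
  simp [spray_apply]

@[simp] theorem spray_coord_p (i : Fin 2) : spray (coord (.p i)) = -(κ i * coord (.x i)) := by
  simp [spray_apply]

@[simp] theorem spray_coord_u : spray (coord .u) = 1 := by
  simp [spray_apply]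

@[simp] theorem spray_coord_v : spray (coord .v) = coord .e - ∑ i, κ i * coord (.x i) ^ 2 := by
  simp [spray_apply]

@[simp] theorem spray_coord_e : spray (coord .e) = 0 := by
  simp [spray_apply]

theorem spray_partialDeriv (c : Coord) (f : SmoothFun Phase) :
    spray (∂ c f) = ∂ c (spray f) - (∂ c (coord .e - ∑ i, κ i * coord (.x i) ^ 2) * ∂ .v f +
      ∑ i, (∂ c (coord (.p i)) * ∂ (.x i) f - (κ i * ∂ c (coord (.x i))) * ∂ (.p i) f)) := by
  simp only [spray_apply, partialDeriv_comm c, Fin.sum_univ_two, map_add, map_sub,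
    Derivation.leibniz, partialDeriv_κ, smul_eq_mul]
  ring

@[simp] theorem spray_partialDeriv_v (f : SmoothFun Phase) : spray (∂ .v f) = ∂ .v (spray f) := by
  simp [spray_partialDeriv]

@[simp] theorem spray_partialDeriv_e (f : SmoothFun Phase) :
    spray (∂ .e f) = ∂ .e (spray f) - ∂ .v f := by
  simp [spray_partialDeriv]

@[simp] theorem spray_partialDeriv_p (i : Fin 2) (f : SmoothFun Phase) :
    spray (∂ (.p i) f) = ∂ (.p i) (spray f) - ∂ (.x i) f := by
  simp [spray_partialDeriv]

@[simp] theorem spray_partialDeriv_x (i : Fin 2) (f : SmoothFun Phase) :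
    spray (∂ (.x i) f) =
      ∂ (.x i) (spray f) + κ i * (∂ (.p i) f + 2 * coord (.x i) * ∂ .v f) := by
  fin_cases i <;> simp [spray_partialDeriv] <;> ring

@[simp] theorem spray_κ (i : Fin 2) : spray (κ i) = 0 :=
  spray.map_algebraMap _

/-! ### Derivatives of quadratic integrals -/

/-- First integrals of the geodesic flow which are quadratic polynomials in the velocities `e`,
`p 0` and `p 1`. The letters in the names of the fields, and of the lemmas below, list the
coordinates with respect to which `F` is differentiated. -/
structure IsQuadraticIntegral (F : SmoothFun Phase) : Prop where
  spray_eq_zero : spray F = 0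
  eee : ∂ .e (∂ .e (∂ .e F)) = 0
  eep (i) : ∂ .e (∂ .e (∂ (.p i) F)) = 0
  epp (i j) : ∂ .e (∂ (.p i) (∂ (.p j) F)) = 0
  ppp (i j k) : ∂ (.p i) (∂ (.p j) (∂ (.p k) F)) = 0

namespace IsQuadraticIntegral

attribute [simp] eee eep epp ppp

variable {F : SmoothFun Phase} (hF : IsQuadraticIntegral F) (i j : Fin 2)

include hF

@[simp] theorem eev : ∂ .e (∂ .e (∂ .v F)) = 0 := by
  have derived := congrArg spray hF.eee
  simp [hF.spray_eq_zero, partialDeriv_comm] at derived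
  grind

@[simp] theorem evv : ∂ .e (∂ .v (∂ .v F)) = 0 := by
  have derived := congrArg spray hF.eev
  simp [hF.spray_eq_zero, partialDeriv_comm] at derived
  grind

@[simp] theorem vvv : ∂ .v (∂ .v (∂ .v F)) = 0 := by
  have derived := congrArg spray hF.evv
  simp [hF.spray_eq_zero] at derived
  grind

theorem eex_eq : ∂ .e (∂ .e (∂ (.x i) F)) = -2 * ∂ .e (∂ .v (∂ (.p i) F)) := by
  have derived := congrArg spray (hF.eep i)
  simp [hF.spray_eq_zero, partialDeriv_comm] at derived
  grind

theorem vvp_eq : ∂ .v (∂ .v (∂ (.p i) F)) = -2 * ∂ .e (∂ .v (∂ (.x i) F)) := by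
  have derived := congrArg spray (hF.eex_eq i)
  simp [hF, hF.spray_eq_zero, partialDeriv_comm] at derived
  grind

theorem vvx_eq : 3 * ∂ .v (∂ .v (∂ (.x i) F)) = 2 * κ i * ∂ .e (∂ .v (∂ (.p i) F)) := by
  have derived := congrArg spray (hF.vvp_eq i)
  simp [hF, hF.spray_eq_zero] at derived
  grind

@[simp] theorem vvp : ∂ .v (∂ .v (∂ (.p i) F)) = 0 := by
  have derived := congrArg spray (hF.vvx_eq i)
  simp [hF, hF.spray_eq_zero] at derived
  grind [κ_sq i, hF.vvp_eq i]

@[simp] theorem evx : ∂ .e (∂ .v (∂ (.x i) F)) = 0 := by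
  grind [hF.vvp_eq i, hF.vvp i]

@[simp] theorem evp : ∂ .e (∂ .v (∂ (.p i) F)) = 0 := by
  have derived := congrArg spray (hF.evx i)
  simp [hF, hF.spray_eq_zero, -evx] at derived
  grind [κ_sq i, hF.vvx_eq i]

@[simp] theorem vvx : ∂ .v (∂ .v (∂ (.x i) F)) = 0 := by
  grind [hF.vvx_eq i, hF.evp i]

@[simp] theorem eex : ∂ .e (∂ .e (∂ (.x i) F)) = 0 := by
  grind [hF.eex_eq i, hF.evp i]

theorem vpp_eq : ∂ .v (∂ (.p i) (∂ (.p j) F)) =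
    -∂ .e (∂ (.p j) (∂ (.x i) F)) - ∂ .e (∂ (.p i) (∂ (.x j) F)) := by
  have derived := congrArg spray (hF.epp i j)
  simp [hF.spray_eq_zero, partialDeriv_comm] at derived
  grind

theorem exx_eq : ∂ .e (∂ (.x i) (∂ (.x j) F)) =
    -∂ .v (∂ (.p j) (∂ (.x i) F)) - ∂ .v (∂ (.p i) (∂ (.x j) F)) := by
  have derived := congrArg spray (hF.vpp_eq i j)
  simp [hF, hF.spray_eq_zero, partialDeriv_comm] at derived
  grind

theorem vxx_self_eq : 3 * ∂ .v (∂ (.x i) (∂ (.x i) F)) =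
    κ i * ∂ .v (∂ (.p i) (∂ (.p i) F)) + 2 * κ i * ∂ .e (∂ .v F) := by
  have derived := congrArg spray (hF.exx_eq i i)
  simp [hF, hF.spray_eq_zero, partialDeriv_comm] at derived
  grind [hF.vpp_eq i i]

theorem vpx_self_eq : ∂ .v (∂ (.p i) (∂ (.x i) F)) = -∂ .v (∂ .v F) := by
  have derived := congrArg spray (hF.vxx_self_eq i)
  simp [hF, hF.spray_eq_zero, partialDeriv_comm] at derived
  grind [κ_sq i]

theorem vxx_self : ∂ .v (∂ (.x i) (∂ (.x i) F)) = κ i * ∂ .v (∂ (.p i) (∂ (.p i) F)) := by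
  have derived := congrArg spray (hF.vpx_self_eq i)
  simp [hF, hF.spray_eq_zero, partialDeriv_comm] at derived
  grind [κ_sq i]

@[simp] theorem vv : ∂ .v (∂ .v F) = 0 := by
  have derived := congrArg spray (hF.vxx_self 0)
  simp [hF, hF.spray_eq_zero, partialDeriv_comm] at derived
  grind [κ_sq 0, hF.vpx_self_eq 0]

theorem vpp_self_eq : ∂ .v (∂ (.p i) (∂ (.p i) F)) = ∂ .e (∂ .v F) := by
  grind [κ_sq i, hF.vxx_self_eq i, hF.vxx_self i]

theorem ppx_eq (k : Fin 2) : ∂ (.p i) (∂ (.p j) (∂ (.x k) F)) +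
    ∂ (.p i) (∂ (.p k) (∂ (.x j) F)) + ∂ (.p j) (∂ (.p k) (∂ (.x i) F)) = 0 := by
  have derived := congrArg spray (hF.ppp i j k)
  simp [hF.spray_eq_zero, partialDeriv_comm] at derived
  grind

theorem pxx_eq : ∂ (.p i) (∂ (.x i) (∂ (.x i) F)) = κ i * coord (.x i) * ∂ .e (∂ .v F) := by
  have derived := congrArg spray (hF.ppx_eq i i i)
  simp [hF, hF.spray_eq_zero, partialDeriv_comm] at derived
  grind [hF.vpp_self_eq i]

theorem xxx_eq : ∂ (.x i) (∂ (.x i) (∂ (.x i) F)) =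
    2 * κ i * ∂ .v (∂ (.p i) F) - κ i * coord (.p i) * ∂ .e (∂ .v F) := by
  have derived := congrArg spray (hF.pxx_eq i)
  simp [hF, hF.spray_eq_zero, partialDeriv_comm] at derived
  grind [κ_sq i, hF.vpx_self_eq i, hF.ppx_eq i i i, hF.vv]

theorem vx_eq : ∂ .v (∂ (.x i) F) = -κ i * coord (.x i) * ∂ .e (∂ .v F) := by
  have derived := congrArg spray (hF.xxx_eq i)
  simp [hF, hF.spray_eq_zero, partialDeriv_comm] at derived
  grind [κ_sq i, hF.pxx_eq i, hF.vxx_self i, hF.vpp_self_eq i]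

@[simp] theorem ev : ∂ .e (∂ .v F) = 0 := by
  have derived := congrArg (∂ (.x 0)) (hF.vx_eq 0)
  simp [hF, partialDeriv_comm] at derived
  grind [κ_sq 0, hF.vxx_self 0, hF.vpp_self_eq 0]

@[simp] theorem vx : ∂ .v (∂ (.x i) F) = 0 := by
  simp [hF.vx_eq i, hF.ev]

@[simp] theorem vp : ∂ .v (∂ (.p i) F) = 0 := by
  have derived := congrArg spray (hF.vx i)
  simp [hF, hF.spray_eq_zero, -vx] at derived
  grind [κ_sq i]

theorem vu : ∂ .v (∂ .u F) = 0 := by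
  have derived := congrArg (∂ .v) hF.spray_eq_zero
  simpa [spray_apply, hF, partialDeriv_comm] using derived

theorem partialDeriv_partialDeriv_v (c : Coord) : ∂ c (∂ .v F) = 0 := by
  cases c <;> simp [partialDeriv_comm _ .v, vu, hF]
  simp [partialDeriv_comm .v .e, hF]

@[simp] theorem vcd (c d : Coord) : ∂ .v (∂ c (∂ d F)) = 0 := by
  rw [partialDeriv_comm, partialDeriv_comm .v d, hF.partialDeriv_partialDeriv_v, map_zero]

theorem epx_comm : ∂ .e (∂ (.p j) (∂ (.x i) F)) = -∂ .e (∂ (.p i) (∂ (.x j) F)) := by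
  grind [hF.vpp_eq i j, hF.vcd]

@[simp] theorem exx : ∂ .e (∂ (.x i) (∂ (.x j) F)) = 0 := by
  simp [hF.exx_eq i j, hF]

@[simp] theorem epx : ∂ .e (∂ (.p i) (∂ (.x j) F)) = 0 := by
  obtain rfl | hij := eq_or_ne i j
  · grind [hF.epx_comm i i]
  · have derived := congrArg spray (hF.exx i j)
    simp [hF, hF.spray_eq_zero, partialDeriv_comm, -exx] at derived
    grind [κ_sq i, κ_eq_neg hij, hF.epx_comm i j]

theorem ppx_self : ∂ (.p i) (∂ (.p i) (∂ (.x i) F)) = 0 := by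
  grind [hF.ppx_eq i i i]

theorem pxx_self : ∂ (.p i) (∂ (.x i) (∂ (.x i) F)) = 0 := by
  simp [hF.pxx_eq, hF]

theorem xxx_self : ∂ (.x i) (∂ (.x i) (∂ (.x i) F)) = 0 := by
  simp [hF.xxx_eq, hF]

theorem pxx_mixed_eq : 2 * ∂ (.p i) (∂ (.x i) (∂ (.x j) F)) =
    -∂ (.p j) (∂ (.x i) (∂ (.x i) F)) := by
  have derived := congrArg spray (hF.ppx_eq i i j)
  simp [hF, hF.spray_eq_zero, partialDeriv_comm] at derived
  grind

section Mixed

variable {i j} (hij : i ≠ j)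

include hij

theorem xxx_mixed_eq : 3 * ∂ (.x i) (∂ (.x i) (∂ (.x j) F)) =
    2 * κ i * ∂ (.p i) (∂ (.p i) (∂ (.x j) F)) := by
  have derived := congrArg spray (hF.pxx_mixed_eq i j)
  simp [hF, hF.spray_eq_zero, partialDeriv_comm] at derived
  grind [κ_eq_neg hij, hF.ppx_eq i i j]

theorem pxx_mixed : ∂ (.p i) (∂ (.x i) (∂ (.x j) F)) = 0 := by
  have derived := congrArg spray (hF.xxx_mixed_eq hij)
  simp [hF, hF.spray_eq_zero, partialDeriv_comm] at derived
  grind [κ_sq i, κ_eq_neg hij, hF.pxx_mixed_eq i j]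

theorem xxx_mixed : ∂ (.x i) (∂ (.x i) (∂ (.x j) F)) = 0 := by
  have derived := congrArg spray (hF.pxx_mixed hij)
  simp [hF, hF.spray_eq_zero, partialDeriv_comm] at derived
  grind [κ_sq i, κ_eq_neg hij, hF.xxx_mixed_eq hij, hF.ppx_eq i i j]

theorem ppx_mixed : ∂ (.p i) (∂ (.p i) (∂ (.x j) F)) = 0 := by
  grind [κ_sq i, hF.xxx_mixed_eq hij, hF.xxx_mixed hij]

end Mixed

@[simp] theorem xxx (k : Fin 2) : ∂ (.x i) (∂ (.x j) (∂ (.x k) F)) = 0 := by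
  have h₀ := hF.xxx_mixed zero_ne_one
  have h₁ := hF.xxx_mixed one_ne_zero
  revert i j k
  simp only [Fin.forall_fin_two]
  grind [hF.xxx_self, partialDeriv_comm]

@[simp] theorem pxx (k : Fin 2) : ∂ (.p i) (∂ (.x j) (∂ (.x k) F)) = 0 := by
  have h₀ := hF.pxx_mixed zero_ne_one
  have h₁ := hF.pxx_mixed one_ne_zero
  have h₂ := hF.pxx_mixed_eq 0 1
  have h₃ := hF.pxx_mixed_eq 1 0
  revert i j k
  simp only [Fin.forall_fin_two]
  grind [hF.pxx_self, partialDeriv_comm]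

@[simp] theorem ppx (k : Fin 2) : ∂ (.p i) (∂ (.p j) (∂ (.x k) F)) = 0 := by
  have h₀ := hF.ppx_mixed zero_ne_one
  have h₁ := hF.ppx_mixed one_ne_zero
  have h₂ := hF.ppx_eq 0 0 1
  have h₃ := hF.ppx_eq 1 1 0
  revert i j k
  simp only [Fin.forall_fin_two]
  grind [hF.ppx_self, partialDeriv_comm]

theorem partialDeriv_cube {a b c : Coord} (ha : a ≠ .u) (hb : b ≠ .u) (hc : c ≠ .u) :
    ∂ a (∂ b (∂ c F)) = 0 := by
  cases a <;> cases b <;> cases c <;> first | contradiction | simp [partialDeriv_comm, hF]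

end IsQuadraticIntegral

/-! ### Explicit geodesics -/

theorem sum_coord {M : Type*} [AddCommMonoid M] (f : Coord → M) :
    ∑ c, f c = f .u + f .v + f .e + ∑ i, f (.x i) + ∑ i, f (.p i) := by
  have univ_eq : (Finset.univ : Finset Coord) = {.u, .v, .e, .x 0, .x 1, .p 0, .p 1} := by decide
  simp [univ_eq, Fin.sum_univ_two, add_assoc]

theorem dirDeriv_eq_sum (w : Phase) (f : SmoothFun Phase) : dirDeriv w f = ∑ c, w c • ∂ c f := by
  ext ξ
  have expansion : w = ∑ c, w c • Pi.single c (1 : ℝ) := by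
    simp [← Pi.single_smul, Finset.univ_sum_single]
  conv_lhs => rw [dirDeriv_apply, expansion, map_sum]
  simp [partialDeriv, dirDeriv_apply]

/-- The geodesic spray as a vector field on phase space. -/
def sprayVector (ξ : Phase) : Phase
  | .u => 1
  | .v => ξ .e - ∑ i, profile i * ξ (.x i) ^ 2
  | .e => 0
  | .x i => ξ (.p i)
  | .p i => -(profile i * ξ (.x i))

theorem spray_apply_eq_dirDeriv (f : SmoothFun Phase) (ξ : Phase) :
    spray f ξ = dirDeriv (sprayVector ξ) f ξ := by
  simp [spray_apply, dirDeriv_eq_sum, sum_coord, sprayVector, κ_apply, coord]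
  ring

/-- The solution of `d²f/dt² = -profile i * f` with value `1` and derivative `0` at `0`. -/
def genCos (i : Fin 2) : ℝ → ℝ :=
  ![Real.cos, Real.cosh] i

/-- The solution of `d²f/dt² = -profile i * f` with value `0` and derivative `1` at `0`. -/
def genSin (i : Fin 2) : ℝ → ℝ :=
  ![Real.sin, Real.sinh] i

theorem hasDerivAt_genCos (i : Fin 2) (t : ℝ) :
    HasDerivAt (genCos i) (-(profile i * genSin i t)) t := by
  fin_cases i
  · simpa [genCos, genSin, profile] using Real.hasDerivAt_cos t
  · simpa [genCos, genSin, profile] using Real.hasDerivAt_cosh t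

theorem hasDerivAt_genSin (i : Fin 2) (t : ℝ) : HasDerivAt (genSin i) (genCos i t) t := by
  fin_cases i
  · exact Real.hasDerivAt_sin t
  · exact Real.hasDerivAt_sinh t

@[simp] theorem genCos_zero (i : Fin 2) : genCos i 0 = 1 := by
  fin_cases i <;> simp [genCos]

@[simp] theorem genSin_zero (i : Fin 2) : genSin i 0 = 0 := by
  fin_cases i <;> simp [genSin]

theorem genCos_sq_add_genSin_sq (i : Fin 2) (t : ℝ) :
    genCos i t ^ 2 + profile i * genSin i t ^ 2 = 1 := by
  fin_cases i
  · simp [genCos, genSin, profile]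
  · simp [genCos, genSin, profile, Real.cosh_sq]

/-- The position `x i` at parameter `s` along the geodesic which starts from `η`. -/
def oscillator (η : Phase) (s : ℝ) (i : Fin 2) : ℝ :=
  genCos i s * η (.x i) + genSin i s * η (.p i)

/-- The velocity `p i` at parameter `s` along the geodesic which starts from `η`. -/
def oscillatorMomentum (η : Phase) (s : ℝ) (i : Fin 2) : ℝ :=
  genCos i s * η (.p i) - profile i * (genSin i s * η (.x i))

/-- The geodesic which at `u = 0` passes through the initial data `η`, whose own `u`-component is
ignored. The `v`-component comes from `dv/ds = e - ∑ i, profile i * (x i)²` and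
`d(x i * p i)/ds = (p i)² - profile i * (x i)²`, where `(p i)² + profile i * (x i)²` is constant. -/
def geodesic (η : Phase) (s : ℝ) : Phase
  | .u => s
  | .v => η .v + (η .e - ∑ i, (η (.p i) ^ 2 + profile i * η (.x i) ^ 2) / 2) * s +
      ∑ i, (oscillator η s i * oscillatorMomentum η s i - η (.x i) * η (.p i)) / 2
  | .e => η .e
  | .x i => oscillator η s i
  | .p i => oscillatorMomentum η s i

theorem hasDerivAt_oscillator (η : Phase) (s : ℝ) (i : Fin 2) :
    HasDerivAt (oscillator η · i) (oscillatorMomentum η s i) s := by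
  convert! ((hasDerivAt_genCos i s).mul_const (η (.x i))).add
    ((hasDerivAt_genSin i s).mul_const (η (.p i))) using 1
  simp only [oscillatorMomentum]
  ring

theorem hasDerivAt_oscillatorMomentum (η : Phase) (s : ℝ) (i : Fin 2) :
    HasDerivAt (oscillatorMomentum η · i) (-(profile i * oscillator η s i)) s := by
  convert! ((hasDerivAt_genCos i s).mul_const (η (.p i))).sub
    (((hasDerivAt_genSin i s).mul_const (η (.x i))).const_mul (profile i)) using 1
  simp only [oscillator]
  ring

theorem oscillator_energy (η : Phase) (s : ℝ) (i : Fin 2) :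
    oscillatorMomentum η s i ^ 2 + profile i * oscillator η s i ^ 2 =
      η (.p i) ^ 2 + profile i * η (.x i) ^ 2 := by
  simp only [oscillatorMomentum, oscillator]
  linear_combination (η (.p i) ^ 2 + profile i * η (.x i) ^ 2) * genCos_sq_add_genSin_sq i s

theorem hasDerivAt_geodesic (η : Phase) (s : ℝ) :
    HasDerivAt (geodesic η) (sprayVector (geodesic η s)) s := by
  refine hasDerivAt_pi.2 fun c ↦ ?_
  cases c with
  | u => exact hasDerivAt_id s
  | v =>
    convert! (((hasDerivAt_id s).const_mul
      (η .e - ∑ i, (η (.p i) ^ 2 + profile i * η (.x i) ^ 2) / 2)).const_add (η .v)).add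
      (HasDerivAt.fun_sum (u := Finset.univ) fun i _ ↦ (((hasDerivAt_oscillator η s i).mul
      (hasDerivAt_oscillatorMomentum η s i)).sub_const (η (.x i) * η (.p i))).div_const 2) using 1
    simp only [sprayVector, geodesic, ← oscillator_energy η s, Fin.sum_univ_two]
    ring
  | e => exact hasDerivAt_const s (η .e)
  | x i => exact hasDerivAt_oscillator η s i
  | p i => exact hasDerivAt_oscillatorMomentum η s i

theorem apply_geodesic_eq_of_spray_eq_zero {f : SmoothFun Phase} (hf : spray f = 0) (η : Phase)
    (s t : ℝ) : f (geodesic η s) = f (geodesic η t) := by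
  have derivative (r : ℝ) : HasDerivAt (fun r ↦ f (geodesic η r)) 0 r := by
    simpa [← spray_apply_eq_dirDeriv, hf] using f.hasDerivAt_comp (hasDerivAt_geodesic η r)
  exact is_const_of_deriv_eq_zero (fun r ↦ (derivative r).differentiableAt)
    (fun r ↦ (derivative r).deriv) s t

/-- The projection from phase space to spacetime. -/
def basePoint : Phase →L[ℝ] Pt :=
  .pi fun a ↦ .proj (![Coord.u, .v, .x 0, .x 1] a)

/-- Pullback of functions from spacetime to phase space. -/
def pullback : SmoothFun Pt →ₐ[ℝ] SmoothFun Phase where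
  toFun f := ofContDiff (f ∘ basePoint) (f.contDiff.comp basePoint.contDiff)
  map_one' := rfl
  map_mul' _ _ := rfl
  map_zero' := rfl
  map_add' _ _ := rfl
  commutes' _ := rfl

theorem pullback_apply (f : SmoothFun Pt) (ξ : Phase) : pullback f ξ = f (basePoint ξ) :=
  rfl

/-- The spacetime components of the geodesic velocity, as functions on phase space. -/
def velocity : Fin 4 → SmoothFun Phase :=
  ![1, coord .e - ∑ i, κ i * coord (.x i) ^ 2, coord (.p 0), coord (.p 1)]

theorem basePoint_sprayVector (ξ : Phase) (a : Fin 4) :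
    basePoint (sprayVector ξ) a = velocity a ξ := by
  fin_cases a <;> simp [basePoint, sprayVector, velocity, coord, κ_apply]

/-- The coordinate derivation `∂/∂xᵃ` on spacetime. -/
def fieldDeriv (a : Fin 4) : Derivation ℝ (SmoothFun Pt) (SmoothFun Pt) :=
  dirDeriv (Pi.single a 1)

theorem fieldDeriv_apply (a : Fin 4) (f : SmoothFun Pt) (p : Pt) : fieldDeriv a f p = pd a f p :=
  rfl

theorem dirDeriv_pullback (w : Phase) (f : SmoothFun Pt) :
    dirDeriv w (pullback f) = ∑ a, basePoint w a • pullback (fieldDeriv a f) := by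
  ext ξ
  have chain : HasFDerivAt (pullback f) ((fderiv ℝ f (basePoint ξ)).comp basePoint) ξ :=
    (f.differentiable _).hasFDerivAt.comp ξ basePoint.hasFDerivAt
  have expansion : basePoint w = ∑ a, basePoint w a • Pi.single a (1 : ℝ) := by
    simp [← Pi.single_smul, Finset.univ_sum_single]
  rw [dirDeriv_apply, chain.fderiv, ContinuousLinearMap.comp_apply]
  conv_lhs => rw [expansion, map_sum]
  simp [pullback_apply, fieldDeriv, dirDeriv_apply]

theorem spray_pullback (f : SmoothFun Pt) :
    spray (pullback f) = ∑ a, velocity a * pullback (fieldDeriv a f) := by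
  ext ξ
  simp [spray_apply_eq_dirDeriv, dirDeriv_pullback, basePoint_sprayVector]

@[simp] theorem partialDeriv_e_pullback (f : SmoothFun Pt) : ∂ .e (pullback f) = 0 := by
  simp [partialDeriv, dirDeriv_pullback, basePoint, Fin.sum_univ_four]

@[simp] theorem partialDeriv_p_pullback (i : Fin 2) (f : SmoothFun Pt) :
    ∂ (.p i) (pullback f) = 0 := by
  simp [partialDeriv, dirDeriv_pullback, basePoint, Fin.sum_univ_four]

@[simp] theorem partialDeriv_v_pullback (f : SmoothFun Pt) :
    ∂ .v (pullback f) = pullback (fieldDeriv 1 f) := by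
  simp [partialDeriv, dirDeriv_pullback, basePoint, Fin.sum_univ_four]

theorem contDiff_genCos (i : Fin 2) : ContDiff ℝ ∞ (genCos i) := by
  fin_cases i
  · exact Real.contDiff_cos
  · exact Real.contDiff_cosh

theorem contDiff_genSin (i : Fin 2) : ContDiff ℝ ∞ (genSin i) := by
  fin_cases i
  · exact Real.contDiff_sin
  · exact Real.contDiff_sinh

/-- The spacetime function `f(u)`. -/
def compU (f : ℝ → ℝ) (hf : ContDiff ℝ ∞ f) : SmoothFun Pt :=
  ofContDiff (fun p ↦ f (p 0)) (hf.comp (contDiff_apply ℝ ℝ 0))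

/-- The spacetime function `genCos i u`. -/
def cosine (i : Fin 2) : SmoothFun Pt :=
  compU (genCos i) (contDiff_genCos i)

/-- The spacetime function `genSin i u`. -/
def sine (i : Fin 2) : SmoothFun Pt :=
  compU (genSin i) (contDiff_genSin i)

theorem spray_pullback_compU {f f' : ℝ → ℝ} (hf : ContDiff ℝ ∞ f)
    (h : ∀ t, HasDerivAt f (f' t) t) (ξ : Phase) :
    spray (pullback (compU f hf)) ξ = f' (ξ .u) := by
  have chain : HasFDerivAt (fun η : Phase ↦ f (η .u)) _ ξ :=
    (h (ξ .u)).hasFDerivAt.comp ξ (hasFDerivAt_apply Coord.u ξ)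
  rw [spray_apply_eq_dirDeriv, dirDeriv_apply]
  exact (DFunLike.congr_fun chain.fderiv _).trans (by simp [sprayVector])

@[simp] theorem spray_pullback_cosine (i : Fin 2) :
    spray (pullback (cosine i)) = -(κ i * pullback (sine i)) := by
  ext ξ
  exact spray_pullback_compU _ (hasDerivAt_genCos i) ξ

@[simp] theorem spray_pullback_sine (i : Fin 2) :
    spray (pullback (sine i)) = pullback (cosine i) := by
  ext ξ
  exact spray_pullback_compU _ (hasDerivAt_genSin i) ξ

/-! ### Conserved quantities -/

/-- Conserved quantities of the geodesic flow. For `c ≠ .v` they are linear in the velocity: the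
`u`-velocity `1`, `e`, and the coordinates `x i`, `p i` carried back along the flow to `u = 0`. The
remaining one determines the initial value of `v`. -/
def invariant : Coord → SmoothFun Phase
  | .u => 1
  | .v => 2 * coord .v - ∑ i, coord (.x i) * coord (.p i) -
      (2 * coord .e - ∑ i, (coord (.p i) ^ 2 + κ i * coord (.x i) ^ 2)) * coord .u
  | .e => coord .e
  | .x i => pullback (cosine i) * coord (.x i) - pullback (sine i) * coord (.p i)
  | .p i => pullback (cosine i) * coord (.p i) + κ i * pullback (sine i) * coord (.x i)

theorem spray_invariant (c : Coord) : spray (invariant c) = 0 := by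
  cases c with
  | u => exact spray.map_one_eq_zero
  | v =>
    simp [invariant, Fin.sum_univ_two]
    ring
  | e => simp [invariant]
  | x i =>
    simp [invariant]
    ring
  | p i =>
    simp [invariant]
    ring

theorem fieldDeriv_one_compU (f : ℝ → ℝ) (hf : ContDiff ℝ ∞ f) :
    fieldDeriv 1 (compU f hf) = 0 := by
  ext p
  have chain : HasFDerivAt (fun q : Pt ↦ f (q 0)) _ p :=
    (hf.differentiable (by simp) (p 0)).hasFDerivAt.comp p (hasFDerivAt_apply 0 p)
  exact (DFunLike.congr_fun chain.fderiv _).trans (by simp)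

theorem partialDeriv_v_invariant (c : Coord) : ∂ .v (invariant c) = if c = .v then 2 else 0 := by
  cases c <;> simp [invariant, cosine, sine, fieldDeriv_one_compU]

/-- The point with `u = 0` on the geodesic through `ξ`. -/
def initialPoint (ξ : Phase) : Phase
  | .u => 0
  | .v => (invariant .v ξ + ∑ i, invariant (.x i) ξ * invariant (.p i) ξ) / 2
  | c => invariant c ξ

theorem geodesic_zero {η : Phase} (hη : η .u = 0) : geodesic η 0 = η := by
  ext c
  cases c <;> simp [geodesic, oscillator, oscillatorMomentum, hη]

theorem invariant_x_apply (i : Fin 2) (ξ : Phase) : invariant (.x i) ξ =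
    genCos i (ξ .u) * ξ (.x i) - genSin i (ξ .u) * ξ (.p i) :=
  rfl

theorem invariant_p_apply (i : Fin 2) (ξ : Phase) : invariant (.p i) ξ =
    genCos i (ξ .u) * ξ (.p i) + profile i * genSin i (ξ .u) * ξ (.x i) :=
  rfl

theorem oscillator_initialPoint (ξ : Phase) (i : Fin 2) :
    oscillator (initialPoint ξ) (ξ .u) i = ξ (.x i) := by
  simp only [oscillator, initialPoint, invariant_x_apply, invariant_p_apply]
  linear_combination ξ (.x i) * genCos_sq_add_genSin_sq i (ξ .u)

theorem oscillatorMomentum_initialPoint (ξ : Phase) (i : Fin 2) :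
    oscillatorMomentum (initialPoint ξ) (ξ .u) i = ξ (.p i) := by
  simp only [oscillatorMomentum, initialPoint, invariant_x_apply, invariant_p_apply]
  linear_combination ξ (.p i) * genCos_sq_add_genSin_sq i (ξ .u)

theorem geodesic_initialPoint (ξ : Phase) : geodesic (initialPoint ξ) (ξ .u) = ξ := by
  ext c
  cases c with
  | u => rfl
  | v =>
    have energy := oscillator_energy (initialPoint ξ) (ξ .u)
    simp only [oscillator_initialPoint, oscillatorMomentum_initialPoint] at energy
    simp only [geodesic, ← energy, oscillator_initialPoint, oscillatorMomentum_initialPoint]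
    simp [initialPoint, invariant, coord_apply, κ_apply, Fin.sum_univ_two]
    ring
  | e => rfl
  | x i => exact oscillator_initialPoint ξ i
  | p i => exact oscillatorMomentum_initialPoint ξ i

/-- The span of the products of two conserved quantities which are linear in the velocity. -/
def quadraticInvariants : Submodule ℝ (SmoothFun Phase) :=
  .span ℝ (Set.range fun s : Sym2 {c : Coord // c ≠ .v} ↦ (s.map (invariant ·.1)).mul)

theorem invariant_mul_invariant_mem {c d : Coord} (hc : c ≠ .v) (hd : d ≠ .v) :
    invariant c * invariant d ∈ quadraticInvariants :=
  Submodule.subset_span ⟨s(⟨c, hc⟩, ⟨d, hd⟩), rfl⟩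

/-- The coordinates other than `u` and `v`. -/
def fibreCoords : Finset Coord := (Finset.univ.erase .u).erase .v

theorem dirDeriv_initialPoint (ξ : Phase) (f : SmoothFun Phase) :
    dirDeriv (initialPoint ξ) f = initialPoint ξ .v • ∂ .v f +
      ∑ c ∈ fibreCoords, invariant c ξ • ∂ c f := by
  have split : insert .v fibreCoords = Finset.univ.erase Coord.u := by decide
  rw [dirDeriv_eq_sum, ← Finset.add_sum_erase _ _ (Finset.mem_univ Coord.u), ← split,
    Finset.sum_insert (by decide)]
  simp only [initialPoint, zero_smul, zero_add]
  refine congr_arg _ (Finset.sum_congr rfl fun c hc ↦ ?_)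
  cases c <;> first | rfl | exact absurd hc (by decide)

namespace IsQuadraticIntegral

variable {F : SmoothFun Phase} (hF : IsQuadraticIntegral F)

include hF

theorem dirDeriv_cube {w : Phase} (hw : w .u = 0) :
    dirDeriv w (dirDeriv w (dirDeriv w F)) = 0 := by
  have expansion (f : SmoothFun Phase) : dirDeriv w f = ∑ c with c ≠ .u, w c • ∂ c f := by
    rw [dirDeriv_eq_sum, Finset.sum_filter_of_ne]
    rintro c - hc rfl
    simp [hw] at hc
  simp only [expansion, map_sum, Derivation.map_smul, Finset.smul_sum]
  refine Finset.sum_eq_zero fun a ha ↦ Finset.sum_eq_zero fun b hb ↦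
    Finset.sum_eq_zero fun c hc ↦ ?_
  rw [hF.partialDeriv_cube] <;> simp_all

theorem eq_sum_invariant_mul_invariant : F = (∂ .v F 0 / 2) • invariant .v +
    (F 0 • (invariant .u * invariant .u) +
      (∂ .v F 0 / 2) • ∑ i, invariant (.x i) * invariant (.p i) +
      ∑ c ∈ fibreCoords, ∂ c F 0 • (invariant c * invariant .u) +
      ∑ c ∈ fibreCoords, ∑ d ∈ fibreCoords, (∂ c (∂ d F) 0 / 2) • (invariant c * invariant d)) := by
  ext ξ
  have flow := apply_geodesic_eq_of_spray_eq_zero hF.spray_eq_zero (initialPoint ξ) (ξ .u) 0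
  rw [geodesic_initialPoint, geodesic_zero rfl, ← zero_add (initialPoint ξ),
    taylor_quadratic (hF.dirDeriv_cube rfl)] at flow
  rw [flow, dirDeriv_initialPoint]
  have invariant_u : invariant .u = 1 := rfl
  simp [dirDeriv_initialPoint, hF.partialDeriv_partialDeriv_v, partialDeriv_comm .v, initialPoint,
    invariant_u, Finset.mul_sum, Finset.sum_div, mul_assoc, mul_comm]
  simp only [div_eq_mul_inv, mul_assoc, mul_comm, mul_left_comm]
  ring

theorem sub_smul_invariant_v_mem : F - (∂ .v F 0 / 2) • invariant .v ∈ quadraticInvariants := by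
  have mem_fibreCoords {c} (hc : c ∈ fibreCoords) : c ≠ .v := Finset.ne_of_mem_erase hc
  nth_rw 1 [hF.eq_sum_invariant_mul_invariant, add_sub_cancel_left]
  have hu : Coord.u ≠ .v := by decide
  refine add_mem (add_mem (add_mem ?_ ?_) ?_) ?_
  · exact Submodule.smul_mem _ _ (invariant_mul_invariant_mem hu hu)
  · exact Submodule.smul_mem _ _ (sum_mem fun i _ ↦ invariant_mul_invariant_mem nofun nofun)
  · exact sum_mem fun c hc ↦ Submodule.smul_mem _ _
      (invariant_mul_invariant_mem (mem_fibreCoords hc) hu)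
  · exact sum_mem fun c hc ↦ sum_mem fun d hd ↦ Submodule.smul_mem _ _
      (invariant_mul_invariant_mem (mem_fibreCoords hc) (mem_fibreCoords hd))

end IsQuadraticIntegral

/-! ### Charges of covectors and tensors -/

/-- The function `H` of the plane wave `2H = y² - z²`. -/
def planeWave (p : Pt) : ℝ :=
  (p 2 ^ 2 - p 3 ^ 2) / 2

/-- The function `X_a ẋᵃ` on phase space, where `ẋ` is the geodesic velocity. -/
def covectorCharge : (Fin 4 → SmoothFun Pt) →ₗ[ℝ] SmoothFun Phase where
  toFun X := ∑ a, pullback (X a) * velocity a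
  map_add' X Y := by simp [add_mul, Finset.sum_add_distrib]
  map_smul' c X := by simp [Finset.smul_sum]

/-- The function `K_{ab} ẋᵃ ẋᵇ` on phase space, where `ẋ` is the geodesic velocity. -/
def tensorCharge : (Fin 4 → Fin 4 → SmoothFun Pt) →ₗ[ℝ] SmoothFun Phase where
  toFun K := ∑ a, covectorCharge (K a) * velocity a
  map_add' K L := by simp [add_mul, Finset.sum_add_distrib]
  map_smul' c K := by simp [Finset.smul_sum]

/-- The covector field with components `X a`, with the point as first argument. -/
def toCovector (X : Fin 4 → SmoothFun Pt) (p : Pt) (a : Fin 4) : ℝ :=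
  X a p

/-- The tensor field with components `K a b`, with the point as first argument. -/
def toTensor : (Fin 4 → Fin 4 → SmoothFun Pt) →ₗ[ℝ] (Pt → Fin 4 → Fin 4 → ℝ) where
  toFun K p a b := K a b p
  map_add' _ _ := rfl
  map_smul' _ _ := rfl

theorem toTensor_apply (K : Fin 4 → Fin 4 → SmoothFun Pt) (p : Pt) (a b : Fin 4) :
    toTensor K p a b = K a b p :=
  rfl

theorem covectorCharge_apply (X : Fin 4 → SmoothFun Pt) (ξ : Phase) :
    covectorCharge X ξ = ∑ a, toCovector X (basePoint ξ) a * velocity a ξ := by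
  simp [covectorCharge, pullback_apply, toCovector]

theorem tensorCharge_apply (K : Fin 4 → Fin 4 → SmoothFun Pt) (ξ : Phase) :
    tensorCharge K ξ = ∑ a, ∑ b, toTensor K (basePoint ξ) a b * velocity a ξ * velocity b ξ := by
  simp [tensorCharge, covectorCharge_apply, toCovector, toTensor_apply, Finset.sum_mul,
    mul_right_comm]

theorem pd_planeWave (a : Fin 4) (p : Pt) : pd a planeWave p = ![0, 0, p 2, -p 3] a := by
  have derivative : HasFDerivAt planeWave _ p :=
    (((hasFDerivAt_apply (𝕜 := ℝ) (2 : Fin 4) p).pow 2).sub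
      ((hasFDerivAt_apply (3 : Fin 4) p).pow 2)).mul_const (2 : ℝ)⁻¹
  rw [pd, derivative.fderiv]
  fin_cases a <;> simp

theorem basePoint_apply (ξ : Phase) : basePoint ξ = ![ξ .u, ξ .v, ξ (.x 0), ξ (.x 1)] := by
  ext a
  fin_cases a <;> rfl

theorem spray_velocity_apply (a : Fin 4) (ξ : Phase) :
    spray (velocity a) ξ =
      -∑ b, ∑ c, Gamma planeWave (basePoint ξ) a b c * velocity b ξ * velocity c ξ := by
  fin_cases a <;> simp [velocity, Gamma, pd_planeWave, Fin.sum_univ_two, Fin.sum_univ_four,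
    basePoint_apply, κ_apply, coord_apply, profile]
  ring

theorem exists_basePoint_velocity (p x : Pt) (hx : x 0 = 1) :
    ∃ ξ, basePoint ξ = p ∧ (velocity · ξ) = x := by
  let ξ : Phase
    | .u => p 0
    | .v => p 1
    | .e => x 1 + 2 * planeWave p
    | .x i => p (i.addNat 2)
    | .p i => x (i.addNat 2)
  refine ⟨ξ, ?_, ?_⟩
  · ext a
    fin_cases a <;> rfl
  · ext a
    fin_cases a <;> simp [velocity, planeWave, coord_apply, κ_apply, profile, hx, ξ]
    ring

theorem spray_covectorCharge_apply (X : Fin 4 → SmoothFun Pt) (ξ : Phase) :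
    spray (covectorCharge X) ξ = ∑ a, ∑ b, covD1 planeWave (toCovector X) (basePoint ξ) a b *
      velocity a ξ * velocity b ξ := by
  have leibniz : spray (covectorCharge X) ξ =
      ∑ d, toCovector X (basePoint ξ) d * spray (velocity d) ξ +
      ∑ b, ∑ a, velocity b ξ * (velocity a ξ * pd a (toCovector X · b) (basePoint ξ)) := by
    simp [covectorCharge, spray_pullback, pullback_apply, fieldDeriv_apply, Finset.sum_add_distrib,
      Finset.mul_sum]
    rfl
  rw [leibniz, Finset.sum_comm]
  simp only [spray_velocity_apply, mul_neg, Finset.sum_neg_distrib, Finset.mul_sum]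
  rw [sum_sum_sum_rotate]
  simp only [covD1, sub_mul, Finset.sum_sub_distrib, Finset.sum_mul, neg_add_eq_sub]
  simp only [mul_comm, mul_left_comm]

theorem covD2_eq_covD1_sub (H : Pt → ℝ) (T : Pt → Fin 4 → Fin 4 → ℝ) (p : Pt) (c a b : Fin 4) :
    covD2 H T p c a b = covD1 H (T · a) p c b - ∑ d, Gamma H p d c a * T p d b :=
  sub_right_comm ..

theorem spray_tensorCharge_apply (K : Fin 4 → Fin 4 → SmoothFun Pt) (ξ : Phase) :
    spray (tensorCharge K) ξ = ∑ c, ∑ a, ∑ b, covD2 planeWave (toTensor K) (basePoint ξ)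
      c a b * velocity c ξ * velocity a ξ * velocity b ξ := by
  have leibniz : spray (tensorCharge K) ξ =
      ∑ d, covectorCharge (K d) ξ * spray (velocity d) ξ +
      ∑ a, velocity a ξ * spray (covectorCharge (K a)) ξ := by
    simp [tensorCharge, Finset.sum_add_distrib]
  have christoffel : ∑ d, covectorCharge (K d) ξ * spray (velocity d) ξ =
      -∑ c, ∑ a, ∑ b, (∑ d, Gamma planeWave (basePoint ξ) d c a * toTensor K (basePoint ξ) d b) *
        velocity c ξ * velocity a ξ * velocity b ξ := by
    simp only [spray_velocity_apply, mul_neg, Finset.sum_neg_distrib, Finset.mul_sum]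
    rw [sum_sum_sum_rotate]
    refine congr_arg _ (Finset.sum_congr rfl fun c _ ↦ Finset.sum_congr rfl fun a _ ↦ ?_)
    simp only [covectorCharge_apply, Finset.sum_mul, toCovector, toTensor_apply]
    rw [Finset.sum_comm]
    simp only [mul_assoc, mul_comm, mul_left_comm]
  have derivative : ∑ a, velocity a ξ * spray (covectorCharge (K a)) ξ =
      ∑ c, ∑ a, ∑ b, covD1 planeWave (toCovector (K a)) (basePoint ξ) c b *
        velocity c ξ * velocity a ξ * velocity b ξ := by
    rw [Finset.sum_comm]
    simp only [spray_covectorCharge_apply, Finset.mul_sum, mul_comm, mul_left_comm]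
  rw [leibniz, christoffel, derivative]
  simp only [covD2_eq_covD1_sub, sub_mul, Finset.sum_sub_distrib, neg_add_eq_sub]
  rfl

theorem isKillingVector_iff_spray_eq_zero {X : Fin 4 → SmoothFun Pt} :
    IsKillingVector planeWave .univ (toCovector X) ↔ spray (covectorCharge X) = 0 := by
  have killing (p : Pt) := forall_quadratic_eq_zero_iff (covD1 planeWave (toCovector X) p) 0
  constructor
  · rintro ⟨-, hX⟩
    ext ξ
    exact (spray_covectorCharge_apply X ξ).trans ((killing _).2 (hX _ trivial) _ rfl)
  · refine fun hX ↦ ⟨fun a ↦ (X a).contDiff.contDiffOn, fun p _ ↦ (killing p).1 fun x hx ↦ ?_⟩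
    obtain ⟨ξ, rfl, rfl⟩ := exists_basePoint_velocity p x hx
    exact (spray_covectorCharge_apply X ξ).symm.trans (DFunLike.congr_fun hX ξ)

theorem covD2_symm {H : Pt → ℝ} {T : Pt → Fin 4 → Fin 4 → ℝ} (hT : ∀ p a b, T p a b = T p b a)
    (p : Pt) (c a b : Fin 4) : covD2 H T p c a b = covD2 H T p c b a := by
  simp only [covD2, hT _ a, hT _ _ b, sub_right_comm]

theorem isKillingTensor_iff_spray_eq_zero {K : Fin 4 → Fin 4 → SmoothFun Pt}
    (hK : ∀ a b, K a b = K b a) :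
    IsKillingTensor planeWave .univ (toTensor K) ↔ spray (tensorCharge K) = 0 := by
  have symm (p : Pt) (a b : Fin 4) : toTensor K p a b = toTensor K p b a :=
    DFunLike.congr_fun (hK a b) p
  have killing (p : Pt) := forall_cubic_eq_zero_iff (covD2_symm (H := planeWave) symm p) 0
  constructor
  · rintro ⟨-, -, h⟩
    ext ξ
    refine (spray_tensorCharge_apply K ξ).trans ((killing _).2 (fun c a b ↦ ?_) _ rfl)
    exact h _ trivial a b c
  · refine fun h ↦ ⟨fun a b ↦ (K a b).contDiff.contDiffOn, symm,
      fun p _ a b c ↦ (killing p).1 (fun x hx ↦ ?_) c a b⟩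
    obtain ⟨ξ, rfl, rfl⟩ := exists_basePoint_velocity p x hx
    exact (spray_tensorCharge_apply K ξ).symm.trans (DFunLike.congr_fun h ξ)

theorem eq_zero_of_tensorCharge_eq_zero {K : Fin 4 → Fin 4 → SmoothFun Pt}
    (hK : ∀ a b, K a b = K b a) (h : tensorCharge K = 0) : K = 0 := by
  ext a b p
  have antisymm := (forall_quadratic_eq_zero_iff (toTensor K p) 0).1 (fun x hx ↦ by
    obtain ⟨ξ, rfl, rfl⟩ := exists_basePoint_velocity p x hx
    exact (tensorCharge_apply K ξ).symm.trans (DFunLike.congr_fun h ξ)) a b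
  simpa [toTensor_apply, hK b a] using antisymm

theorem contDiff_planeWave : ContDiff ℝ ∞ planeWave := by
  unfold planeWave
  fun_prop

/-! ### A basis of Killing tensors -/

/-- The coordinate `xᵃ` as a smooth function on spacetime. -/
def position (a : Fin 4) : SmoothFun Pt :=
  ofContDiff (fun p ↦ p a) (contDiff_apply ℝ ℝ a)

/-- The Killing vectors whose charges are the conserved quantities linear in the velocity; the value
at `.v`, which labels no such quantity, is junk. -/
def killingCovector : Coord → Fin 4 → SmoothFun Pt
  | .u => Pi.single 0 1
  | .v => 0
  | .e => Pi.single 0 (2 * ofContDiff planeWave contDiff_planeWave) + Pi.single 1 1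
  | .x i => Pi.single 0 (cosine i * position (i.addNat 2)) - Pi.single (i.addNat 2) (sine i)
  | .p i => Pi.single 0 (profile i • (sine i * position (i.addNat 2))) +
      Pi.single (i.addNat 2) (cosine i)

theorem covectorCharge_single (a : Fin 4) (f : SmoothFun Pt) :
    covectorCharge (Pi.single a f) = pullback f * velocity a := by
  ext ξ
  simp [covectorCharge, Pi.single_apply, apply_ite pullback]

theorem pullback_position_addNat (i : Fin 2) :
    pullback (position (i.addNat 2)) = coord (.x i) := by
  fin_cases i <;> rfl

theorem velocity_addNat (i : Fin 2) : velocity (i.addNat 2) = coord (.p i) := by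
  fin_cases i <;> rfl

theorem velocity_zero : velocity 0 = 1 :=
  rfl

theorem velocity_one : velocity 1 =
    coord .e - 2 * pullback (ofContDiff planeWave contDiff_planeWave) := by
  ext ξ
  simp [velocity, pullback_apply, planeWave, basePoint_apply, κ_apply, profile, coord_apply]
  ring

theorem covectorCharge_killingCovector {c : Coord} (hc : c ≠ .v) :
    covectorCharge (killingCovector c) = invariant c := by
  cases c with
  | u => simp [killingCovector, covectorCharge_single, velocity_zero, invariant]
  | v => exact absurd rfl hc
  | e =>
    have map_two : pullback 2 = 2 := map_ofNat pullback 2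
    simp [killingCovector, covectorCharge_single, velocity_zero, velocity_one, invariant, map_two]
  | x i =>
    simp [killingCovector, covectorCharge_single, pullback_position_addNat, velocity_zero,
      velocity_addNat, invariant]
  | p i =>
    simp [killingCovector, covectorCharge_single, pullback_position_addNat, velocity_zero,
      velocity_addNat, invariant, κ, Algebra.smul_def]
    ring

/-- The symmetrized product `X_{(a}Y_{b)}`. -/
def symProd (X Y : Fin 4 → SmoothFun Pt) (a b : Fin 4) : SmoothFun Pt :=
  (2⁻¹ : ℝ) • (X a * Y b + X b * Y a)

theorem tensorCharge_symProd (X Y : Fin 4 → SmoothFun Pt) :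
    tensorCharge (symProd X Y) = covectorCharge X * covectorCharge Y := by
  ext ξ
  simp [tensorCharge_apply, covectorCharge_apply, symProd, toTensor_apply, toCovector,
    Fin.sum_univ_four]
  ring

theorem toTensor_symProd (X Y : Fin 4 → SmoothFun Pt) (p : Pt) (a b : Fin 4) :
    toTensor (symProd X Y) p a b =
      (toCovector X p a * toCovector Y p b + toCovector X p b * toCovector Y p a) / 2 :=
  (div_eq_inv_mul _ _).symm

/-- The components of the plane wave metric as smooth functions. -/
def metric (a b : Fin 4) : SmoothFun Pt :=
  ofContDiff (ppMetric planeWave · a b) <| by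
    have := contDiff_planeWave
    unfold ppMetric
    split_ifs <;> fun_prop

theorem toTensor_metric : toTensor metric = ppMetric planeWave :=
  rfl

theorem tensorCharge_metric :
    tensorCharge metric = ∑ i, (coord (.p i) ^ 2 + κ i * coord (.x i) ^ 2) - 2 * coord .e := by
  ext ξ
  simp [tensorCharge_apply, toTensor_metric, ppMetric, Fin.sum_univ_four, velocity, κ_apply,
    profile, planeWave, basePoint_apply, coord_apply]
  ring

/-- The irreducible Killing tensor `u g_{ab} + δ^u_{(a} Y_{b)}` with `Y = (2v, 0, -y, -z)`. -/
def irreducibleTensor (a b : Fin 4) : SmoothFun Pt :=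
  position 0 * metric a b +
    symProd (Pi.single 0 1) ![2 * position 1, 0, -position 2, -position 3] a b

theorem tensorCharge_irreducibleTensor : tensorCharge irreducibleTensor = invariant .v := by
  have decomposition : irreducibleTensor = (fun a b ↦ position 0 * metric a b) +
      symProd (Pi.single 0 1) ![2 * position 1, 0, -position 2, -position 3] := rfl
  have charge_mul_metric :
      tensorCharge (fun a b ↦ position 0 * metric a b) = coord .u * tensorCharge metric := by
    ext ξ
    simp [tensorCharge_apply, toTensor_apply, Finset.mul_sum, mul_assoc]
    rfl
  rw [decomposition, map_add, tensorCharge_symProd, charge_mul_metric, covectorCharge_single,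
    tensorCharge_metric]
  ext ξ
  simp [covectorCharge, Fin.sum_univ_four, velocity, invariant, pullback_apply, position,
    coord_apply, basePoint_apply]
  ring

theorem symProd_comm (X Y : Fin 4 → SmoothFun Pt) : symProd X Y = symProd Y X := by
  ext a b p
  simp [symProd, mul_comm, add_comm]

/-- A basis of the space of Killing tensors: the products of two of the six Killing vectors, and one
irreducible tensor. -/
def basisTensor : Option (Sym2 {c : Coord // c ≠ .v}) → Fin 4 → Fin 4 → SmoothFun Pt
  | none => irreducibleTensor
  | some s => (s.map fun c ↦ killingCovector c.1).lift ⟨symProd, symProd_comm⟩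

theorem tensorCharge_basisTensor_some (s : Sym2 {c : Coord // c ≠ .v}) :
    tensorCharge (basisTensor (some s)) = (s.map (invariant ·.1)).mul := by
  induction s with | _ c d
  exact (tensorCharge_symProd _ _).trans
    (congrArg₂ (· * ·) (covectorCharge_killingCovector c.2) (covectorCharge_killingCovector d.2))

/-- The smooth symmetric 2-tensor fields. -/
def symmetricTensors : Submodule ℝ (Fin 4 → Fin 4 → SmoothFun Pt) where
  carrier := {K | ∀ a b, K a b = K b a}
  zero_mem' _ _ := rfl
  add_mem' hK hL a b := congrArg₂ (· + ·) (hK a b) (hL a b)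
  smul_mem' c _ hK a b := congrArg (c • ·) (hK a b)

theorem symProd_mem_symmetricTensors (X Y : Fin 4 → SmoothFun Pt) :
    symProd X Y ∈ symmetricTensors :=
  fun a b ↦ by simp [symProd, add_comm]

theorem metric_mem_symmetricTensors : metric ∈ symmetricTensors := fun a b ↦ by
  ext p
  simp [metric, ppMetric, and_comm, or_comm]

theorem basisTensor_mem_symmetricTensors (o) : basisTensor o ∈ symmetricTensors := by
  cases o with
  | none =>
    exact fun a b ↦ congrArg₂ (position 0 * · + ·) (metric_mem_symmetricTensors a b)
      (symProd_mem_symmetricTensors _ _ a b)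
  | some s =>
    induction s with | _ c d
    exact symProd_mem_symmetricTensors (killingCovector c) (killingCovector d)

theorem partialDeriv_partialDeriv_velocity {c d : Coord} (hd : ∀ f, ∂ d (pullback f) = 0)
    (a : Fin 4) : ∂ c (∂ d (velocity a)) = 0 := by
  fin_cases a
  · simp [velocity_zero]
  · simp [velocity_one, hd, apply_ite (∂ c)]
  all_goals simp [velocity, apply_ite (∂ c)]

theorem partialDeriv_cube_tensorCharge {b c d : Coord} (hb : ∀ f, ∂ b (pullback f) = 0)
    (hc : ∀ f, ∂ c (pullback f) = 0) (hd : ∀ f, ∂ d (pullback f) = 0)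
    (K : Fin 4 → Fin 4 → SmoothFun Pt) : ∂ b (∂ c (∂ d (tensorCharge K))) = 0 := by
  simp [tensorCharge, covectorCharge, hb, hc, hd, partialDeriv_partialDeriv_velocity]

theorem isQuadraticIntegral_tensorCharge {K : Fin 4 → Fin 4 → SmoothFun Pt}
    (hK : spray (tensorCharge K) = 0) : IsQuadraticIntegral (tensorCharge K) where
  spray_eq_zero := hK
  eee := partialDeriv_cube_tensorCharge (by simp) (by simp) (by simp) K
  eep _ := partialDeriv_cube_tensorCharge (by simp) (by simp) (by simp) K
  epp _ _ := partialDeriv_cube_tensorCharge (by simp) (by simp) (by simp) K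
  ppp _ _ _ := partialDeriv_cube_tensorCharge (by simp) (by simp) (by simp) K

theorem exists_invariant_eq (x : {c : Coord // c ≠ .v} → ℝ) (hx : x ⟨.u, nofun⟩ = 1) :
    ∃ ξ, (fun c : {c : Coord // c ≠ .v} ↦ invariant c.1 ξ) = x := by
  let ξ (c : Coord) : ℝ := if hc : c = .u ∨ c = .v then 0 else x ⟨c, (hc <| .inr ·)⟩
  refine ⟨ξ, funext fun ⟨c, hc⟩ ↦ ?_⟩
  cases c with
  | u => exact hx.symm
  | v => exact absurd rfl hc
  | e => rfl
  | x i => simp [invariant_x_apply, ξ]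
  | p i => simp [invariant_p_apply, ξ]

theorem linearIndependent_invariant_mul_invariant :
    LinearIndependent ℝ fun s : Sym2 {c : Coord // c ≠ .v} ↦ (s.map (invariant ·.1)).mul := by
  rw [Fintype.linearIndependent_iff]
  intro g hg
  refine Fintype.linearIndependent_iff.1 linearIndependent_sym2_mul_X g <|
    eq_zero_of_isHomogeneous (n := 2) (.sum _ _ _ fun s _ ↦ ?_) ⟨.u, nofun⟩ fun x hx ↦ ?_
  · induction s with | _ c d
    rw [MvPolynomial.smul_eq_C_mul]
    exact ((MvPolynomial.isHomogeneous_X ℝ c).mul (MvPolynomial.isHomogeneous_X ℝ d)).C_mul _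
  · obtain ⟨ξ, rfl⟩ := exists_invariant_eq x hx
    refine Eq.trans ?_ (DFunLike.congr_fun hg ξ)
    simp only [map_sum, MvPolynomial.smul_eval, SmoothFun.sum_apply]
    refine Finset.sum_congr rfl fun s _ ↦ ?_
    induction s with | _ c d
    simp

theorem partialDeriv_v_eq_zero_of_mem {f : SmoothFun Phase} (hf : f ∈ quadraticInvariants) :
    ∂ .v f = 0 := by
  induction hf using Submodule.span_induction with
  | mem f hf =>
    obtain ⟨s, rfl⟩ := hf
    induction s with | _ c d
    simp [partialDeriv_v_invariant, c.2, d.2]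
  | zero => exact map_zero _
  | add f g _ _ hf hg => rw [map_add, hf, hg, add_zero]
  | smul a f _ hf => rw [Derivation.map_smul, hf, smul_zero]

theorem invariant_v_notMem : invariant .v ∉ quadraticInvariants := fun h ↦ by
  have two_eq_zero : (2 : SmoothFun Phase) = 0 := by
    simpa [partialDeriv_v_invariant] using partialDeriv_v_eq_zero_of_mem h
  simpa using DFunLike.congr_fun two_eq_zero 0

theorem linearIndependent_basisTensor : LinearIndependent ℝ basisTensor := by
  have charge_some : (tensorCharge ∘ basisTensor) ∘ some =
      fun s : Sym2 {c : Coord // c ≠ .v} ↦ (s.map (invariant ·.1)).mul :=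
    funext tensorCharge_basisTensor_some
  have charge_none : (tensorCharge ∘ basisTensor) none = invariant .v :=
    tensorCharge_irreducibleTensor
  refine .of_comp tensorCharge (linearIndependent_option.2 ⟨?_, ?_⟩)
  · rw [charge_some]
    exact linearIndependent_invariant_mul_invariant
  · rw [charge_some, charge_none]
    exact invariant_v_notMem

theorem toTensor_injective : Function.Injective toTensor := fun K L h ↦ by
  ext a b p
  exact congrFun₃ h p a b

theorem mem_span_basisTensor_some_iff {K : Fin 4 → Fin 4 → SmoothFun Pt}
    (hK : K ∈ symmetricTensors) :
    K ∈ Submodule.span ℝ (Set.range fun s ↦ basisTensor (some s)) ↔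
      tensorCharge K ∈ quadraticInvariants := by
  have map_span : quadraticInvariants =
      (Submodule.span ℝ (Set.range fun s ↦ basisTensor (some s))).map tensorCharge := by
    rw [Submodule.map_span, ← Set.range_comp]
    exact congrArg (fun b ↦ Submodule.span ℝ (Set.range b))
      (funext tensorCharge_basisTensor_some).symm
  rw [map_span]
  refine ⟨Submodule.mem_map_of_mem, ?_⟩
  rintro ⟨L, hL, charge_eq⟩
  have symm : L ∈ symmetricTensors :=
    Submodule.span_le.2 (Set.range_subset_iff.2 fun s ↦ basisTensor_mem_symmetricTensors _) hL
  have difference_eq_zero : K - L = 0 :=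
    eq_zero_of_tensorCharge_eq_zero (sub_mem hK symm) (by simp [charge_eq])
  rwa [sub_eq_zero.1 difference_eq_zero]

theorem spray_tensorCharge_basisTensor (o) : spray (tensorCharge (basisTensor o)) = 0 := by
  cases o with
  | none => rw [basisTensor, tensorCharge_irreducibleTensor, spray_invariant]
  | some s =>
    rw [tensorCharge_basisTensor_some]
    induction s with | _ c d
    simp [spray_invariant]

theorem mem_span_basisTensor_iff {K : Fin 4 → Fin 4 → SmoothFun Pt} :
    K ∈ Submodule.span ℝ (Set.range basisTensor) ↔
      K ∈ symmetricTensors ∧ spray (tensorCharge K) = 0 := by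
  constructor
  · let S := symmetricTensors ⊓ LinearMap.ker (spray.toLinearMap ∘ₗ tensorCharge)
    have le : Submodule.span ℝ (Set.range basisTensor) ≤ S :=
      Submodule.span_le.2 (Set.range_subset_iff.2 fun o ↦
        ⟨basisTensor_mem_symmetricTensors o, spray_tensorCharge_basisTensor o⟩)
    exact fun hK ↦ le hK
  · rintro ⟨symm, hK⟩
    set r := ∂ .v (tensorCharge K) 0 / 2
    have reduced : K - r • irreducibleTensor ∈
        Submodule.span ℝ (Set.range fun s ↦ basisTensor (some s)) := by
      have symm_irreducible : r • irreducibleTensor ∈ symmetricTensors :=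
        Submodule.smul_mem _ r (basisTensor_mem_symmetricTensors none)
      rw [mem_span_basisTensor_some_iff (sub_mem symm symm_irreducible), map_sub, map_smul,
        tensorCharge_irreducibleTensor]
      exact (isQuadraticIntegral_tensorCharge hK).sub_smul_invariant_v_mem
    rw [← sub_add_cancel K (r • irreducibleTensor)]
    refine add_mem (Submodule.span_mono ?_ reduced)
      (Submodule.smul_mem _ _ (Submodule.subset_span ⟨none, rfl⟩))
    exact Set.range_comp_subset_range some basisTensor

theorem map_toTensor_span {ι : Type*} (b : ι → Fin 4 → Fin 4 → SmoothFun Pt) :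
    (Submodule.span ℝ (Set.range b)).map toTensor =
      Submodule.span ℝ (Set.range fun i ↦ toTensor (b i)) := by
  rw [Submodule.map_span, ← Set.range_comp]
  rfl

theorem isKillingTensor_iff_mem_span {K : Pt → Fin 4 → Fin 4 → ℝ} :
    IsKillingTensor planeWave .univ K ↔
      K ∈ Submodule.span ℝ (Set.range fun o ↦ toTensor (basisTensor o)) := by
  rw [← map_toTensor_span]
  constructor
  · intro hK
    let L (a b : Fin 4) : SmoothFun Pt := ofContDiff (K · a b) (contDiffOn_univ.1 (hK.1 a b))
    have symm (a b) : L a b = L b a := by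
      ext p
      exact hK.2.1 p a b
    exact ⟨L, mem_span_basisTensor_iff.2
      ⟨symm, (isKillingTensor_iff_spray_eq_zero symm).1 hK⟩, rfl⟩
  · rintro ⟨L, hL, rfl⟩
    have ⟨symm, integral⟩ := mem_span_basisTensor_iff.1 hL
    exact (isKillingTensor_iff_spray_eq_zero symm).2 integral

theorem spray_tensorCharge_symProd {X Y : Fin 4 → SmoothFun Pt} (hX : spray (covectorCharge X) = 0)
    (hY : spray (covectorCharge Y) = 0) : spray (tensorCharge (symProd X Y)) = 0 := by
  simp [tensorCharge_symProd, hX, hY]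

-- Otherwise `f` and `f * f` would not both be affine in `v`.
theorem partialDeriv_v_covectorCharge {X : Fin 4 → SmoothFun Pt}
    (hX : spray (covectorCharge X) = 0) : ∂ .v (covectorCharge X) = 0 := by
  have charge_u : covectorCharge (killingCovector .u) = 1 := covectorCharge_killingCovector nofun
  have linear := (isQuadraticIntegral_tensorCharge (spray_tensorCharge_symProd hX
    (by simp [charge_u] : spray (covectorCharge (killingCovector .u)) = 0))).vv
  have square := (isQuadraticIntegral_tensorCharge (spray_tensorCharge_symProd hX hX)).vv
  rw [tensorCharge_symProd, charge_u, mul_one] at linear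
  ext ξ
  simpa [tensorCharge_symProd, linear] using DFunLike.congr_fun square ξ

theorem tensorCharge_mem_quadraticInvariants {K : Fin 4 → Fin 4 → SmoothFun Pt}
    (hK : spray (tensorCharge K) = 0) (hv : ∂ .v (tensorCharge K) = 0) :
    tensorCharge K ∈ quadraticInvariants := by
  simpa [hv] using (isQuadraticIntegral_tensorCharge hK).sub_smul_invariant_v_mem

theorem metric_mem_span :
    metric ∈ Submodule.span ℝ (Set.range fun s ↦ basisTensor (some s)) := by
  refine (mem_span_basisTensor_some_iff metric_mem_symmetricTensors).2
    (tensorCharge_mem_quadraticInvariants ?_ ?_)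
  · simp [tensorCharge_metric]
    ring
  · simp [tensorCharge_metric]

theorem symProd_mem_span {X Y : Fin 4 → SmoothFun Pt}
    (hX : spray (covectorCharge X) = 0) (hY : spray (covectorCharge Y) = 0) :
    symProd X Y ∈ Submodule.span ℝ (Set.range fun s ↦ basisTensor (some s)) := by
  refine (mem_span_basisTensor_some_iff (symProd_mem_symmetricTensors X Y)).2
    (tensorCharge_mem_quadraticInvariants (spray_tensorCharge_symProd hX hY) ?_)
  simp [tensorCharge_symProd, partialDeriv_v_covectorCharge, hX, hY]

theorem exists_toCovector_eq {X : Pt → Fin 4 → ℝ} (hX : IsKillingVector planeWave .univ X) :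
    ∃ Y, toCovector Y = X ∧ spray (covectorCharge Y) = 0 :=
  let Y (a : Fin 4) : SmoothFun Pt := ofContDiff (X · a) (contDiffOn_univ.1 (hX.1 a))
  ⟨Y, rfl, isKillingVector_iff_spray_eq_zero.1 hX⟩

theorem isKillingVector_killingCovector {c : Coord} (hc : c ≠ .v) :
    IsKillingVector planeWave .univ (toCovector (killingCovector c)) := by
  rw [isKillingVector_iff_spray_eq_zero, covectorCharge_killingCovector hc, spray_invariant]

theorem exists_isKillingVector_toTensor_basisTensor_some (s : Sym2 {c : Coord // c ≠ .v}) :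
    ∃ X Y, IsKillingVector planeWave .univ X ∧ IsKillingVector planeWave .univ Y ∧
      ∀ p a b, toTensor (basisTensor (some s)) p a b = (X p a * Y p b + X p b * Y p a) / 2 := by
  induction s with | _ c d
  exact ⟨_, _, isKillingVector_killingCovector c.2, isKillingVector_killingCovector d.2,
    toTensor_symProd _ _⟩

theorem isReducible_iff_mem_span {K : Pt → Fin 4 → Fin 4 → ℝ} :
    IsReducible planeWave .univ K ↔
      K ∈ Submodule.span ℝ (Set.range fun s ↦ toTensor (basisTensor (some s))) := by
  rw [← map_toTensor_span]
  constructor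
  · rintro ⟨c₀, n, c, X, Y, hX, hY, hK⟩
    choose X' hX' sprayX using fun i ↦ exists_toCovector_eq (hX i)
    choose Y' hY' sprayY using fun i ↦ exists_toCovector_eq (hY i)
    refine ⟨c₀ • metric + ∑ i, c i • symProd (X' i) (Y' i), ?_, ?_⟩
    · exact add_mem (Submodule.smul_mem _ c₀ metric_mem_span) (sum_mem fun i _ ↦
        Submodule.smul_mem _ (c i) (symProd_mem_span (sprayX i) (sprayY i)))
    · ext p a b
      simp [hK p trivial, toTensor_symProd, toTensor_metric, hX', hY']
  · rw [map_toTensor_span, Submodule.mem_span_range_iff_exists_fun]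
    rintro ⟨c, rfl⟩
    choose X Y hX hY eq using exists_isKillingVector_toTensor_basisTensor_some
    let e := (Fintype.equivFin (Sym2 {c : Coord // c ≠ .v})).symm
    refine ⟨0, _, c ∘ e, X ∘ e, Y ∘ e, fun i ↦ hX _, fun i ↦ hY _, fun p _ a b ↦ ?_⟩
    simp [eq, ← e.sum_comp]

theorem linearIndependent_toTensor_basisTensor :
    LinearIndependent ℝ fun o ↦ toTensor (basisTensor o) :=
  linearIndependent_basisTensor.map_injOn toTensor toTensor_injective.injOn

/-- For the vacuum plane wave `2H = y² - z²` on `ℝ⁴`, the space of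
Killing tensors has dimension exactly 22 and its subspace of reducible Killing tensors
has dimension exactly 21. -/
theorem stmt11 :
    let H : Pt → ℝ := fun p => ((p 2) ^ 2 - (p 3) ^ 2) / 2
    let U : Set Pt := Set.univ
    (∃ B : Fin 22 → Pt → Fin 4 → Fin 4 → ℝ,
      (∀ i, IsKillingTensor H U (B i)) ∧
      (∀ c : Fin 22 → ℝ,
        (∀ p ∈ U, ∀ a b, (∑ i, c i * B i p a b) = 0) → c = 0) ∧
      (∀ K, IsKillingTensor H U K →
        ∃ c : Fin 22 → ℝ, ∀ p ∈ U, ∀ a b, K p a b = ∑ i, c i * B i p a b)) ∧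
    (∃ R : Fin 21 → Pt → Fin 4 → Fin 4 → ℝ,
      (∀ i, IsReducible H U (R i)) ∧
      (∀ c : Fin 21 → ℝ,
        (∀ p ∈ U, ∀ a b, (∑ i, c i * R i p a b) = 0) → c = 0) ∧
      (∀ K, IsReducible H U K →
        ∃ c : Fin 21 → ℝ, ∀ p ∈ U, ∀ a b, K p a b = ∑ i, c i * R i p a b)) := by
  intro H U
  have card_pairs : Fintype.card (Sym2 {c : Coord // c ≠ .v}) = 21 := by decide
  constructor
  · exact exists_fin_family (by rw [Fintype.card_option, card_pairs])
      linearIndependent_toTensor_basisTensor isKillingTensor_iff_mem_span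
  · exact exists_fin_family card_pairs
      (linearIndependent_toTensor_basisTensor.comp some (Option.some_injective _))
      isReducible_iff_mem_span

end
end

section
/- Let I ⊆ ℝ be an open interval, let A : I → ℝ be three times continuously differentiable with A'(u) ≠ 0 for all u ∈ I, and suppose A satisfies 5 (A'')² − 4 A' A''' + 16 A (A')² = 0 on I. Set Γ = |A'|^{−1/4}. Then Γ'' + A Γ = 0 on I, and the symmetric tensor field (K₈)_{ab} = −(2AΓ' + (1/3)A'Γ) y(y²+z²) δ^u_a δ^u_b − 2Γ' y δ_{(a}^u δ_{b)}^v + (2/3)AΓ(3y² + 2z²) δ_{(a}^u δ_{b)}^y + (2/3)AΓ yz δ_{(a}^u δ_{b)}^z + 2Γ δ_{(a}^v δ_{b)}^y − (2/3)Γ' z δ_{(a}^y δ_{b)}^z + (2/3)Γ' y δ^z_a δ^z_b is a Killing tensor of the conformally flat plane wave metric 2H = A(u)(y² + z²) on I × ℝ³. -/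
noncomputable section

/-- The Killing tensor `K₈` of a conformally flat plane wave with profile `A(u)`,
built from a function `Γ(u)`. -/
def KTeight (A Γf : ℝ → ℝ) : Pt → Fin 4 → Fin 4 → ℝ := fun p a b =>
  -(2 * A (p 0) * deriv Γf (p 0) + (1 / 3) * deriv A (p 0) * Γf (p 0))
      * p 2 * ((p 2) ^ 2 + (p 3) ^ 2) * sd 0 0 a b
    - 2 * deriv Γf (p 0) * p 2 * sd 0 1 a b
    + (2 / 3) * A (p 0) * Γf (p 0) * (3 * (p 2) ^ 2 + 2 * (p 3) ^ 2) * sd 0 2 a b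
    + (2 / 3) * A (p 0) * Γf (p 0) * p 2 * p 3 * sd 0 3 a b
    + 2 * Γf (p 0) * sd 1 2 a b
    - (2 / 3) * deriv Γf (p 0) * p 3 * sd 2 3 a b
    + (2 / 3) * deriv Γf (p 0) * p 2 * sd 3 3 a b

/-!
For smooth `A` and `Γ` with `Γ'' + AΓ = 0`, the cyclic sum of the covariant derivatives of `K₈` is
`-(4A'Γ' + A''Γ) y(y² + z²) δ^u_a δ^u_b δ^u_c`, so `K₈` is Killing as soon as `4A'Γ' + A''Γ = 0`,
that is, as soon as `A'Γ⁴` is locally constant; this is what singles out `Γ = |A'|^{-1/4}`.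
Differentiating `4A'Γ' + A''Γ = 0` gives `16(A')²Γ'' = (5(A'')² - 4A'A''')Γ`, which turns the
equation for `A` into `Γ'' + AΓ = 0`. Finally, since `A' ≠ 0`, the equation for `A` expresses
`A'''` as a smooth function of `A`, `A'`, `A''`, so `A` is smooth by bootstrapping.
-/

open scoped ContDiff Topology

section Calculus

variable {𝕜 F : Type*} [NontriviallyNormedField 𝕜] [NormedAddCommGroup F] [NormedSpace 𝕜 F]
  {s : Set 𝕜} {f : 𝕜 → F}

theorem contDiffOn_of_contDiffOn_deriv {n : ℕ∞} (hs : IsOpen s) (hf : DifferentiableOn 𝕜 f s)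
    (hf' : ContDiffOn 𝕜 n (deriv f) s) : ContDiffOn 𝕜 n f s :=
  ((contDiffOn_succ_iff_deriv_of_isOpen hs).2 ⟨hf, by simp, hf'⟩).of_le le_self_add

theorem contDiffOn_infty_of_bootstrap (hs : IsOpen s) (hf : DifferentiableOn 𝕜 f s)
    (hboot : ∀ n : ℕ, ContDiffOn 𝕜 n f s → ContDiffOn 𝕜 n (deriv f) s) :
    ContDiffOn 𝕜 ∞ f s := by
  refine contDiffOn_infty.2 fun n ↦ ?_
  induction n with
  | zero => exact contDiffOn_zero.2 hf.continuousOn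
  | succ n ih => exact (contDiffOn_succ_iff_deriv_of_isOpen hs).2 ⟨hf, by simp, hboot n ih⟩

theorem sq_mul_deriv_deriv_of_mul_deriv_eq {f g : 𝕜 → 𝕜} {r u : 𝕜}
    (hf : DifferentiableAt 𝕜 f u) (hf' : DifferentiableAt 𝕜 (deriv f) u)
    (hg : DifferentiableAt 𝕜 g u) (hg' : DifferentiableAt 𝕜 (deriv g) u)
    (h : ∀ᶠ x in 𝓝 u, f x * deriv g x = r * deriv f x * g x) :
    f u ^ 2 * deriv (deriv g) u =
      r * (f u * deriv (deriv f) u + (r - 1) * deriv f u ^ 2) * g u := by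
  have hderiv : deriv f u * deriv g u + f u * deriv (deriv g) u =
      r * deriv (deriv f) u * g u + r * deriv f u * deriv g u := by
    have := Filter.EventuallyEq.deriv_eq h
    rwa [deriv_fun_mul hf hg', deriv_fun_mul (hf'.const_mul r) hg, deriv_const_mul r hf'] at this
  linear_combination f u * hderiv + (r - 1) * deriv f u * h.self_of_nhds

end Calculus

section ProfileEquation

variable {I : Set ℝ} {A f : ℝ → ℝ} {u : ℝ}

theorem contDiffOn_infty_of_profile_ode (hI : IsOpen I) (hA₁ : DifferentiableOn ℝ (deriv A) I)
    (hA₂ : DifferentiableOn ℝ (deriv (deriv A)) I) (hAnz : ∀ u ∈ I, deriv A u ≠ 0)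
    (hode : ∀ u ∈ I,
      5 * (deriv (deriv A) u) ^ 2 - 4 * deriv A u * deriv (deriv (deriv A)) u
        + 16 * A u * (deriv A u) ^ 2 = 0) :
    ContDiffOn ℝ ∞ A I := by
  have hA₀ : DifferentiableOn ℝ A I := fun u hu ↦
    (differentiableAt_of_deriv_ne_zero (hAnz u hu)).differentiableWithinAt
  have hA₃ : ∀ u ∈ I, deriv (deriv (deriv A)) u =
      (5 * deriv (deriv A) u ^ 2 + 16 * A u * deriv A u ^ 2) / (4 * deriv A u) := fun u hu ↦ by
    rw [eq_div_iff (mul_ne_zero four_ne_zero (hAnz u hu))]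
    linear_combination -hode u hu
  have hsmooth₂ : ContDiffOn ℝ ∞ (deriv (deriv A)) I := by
    refine contDiffOn_infty_of_bootstrap hI hA₂ fun n h₂ ↦ ?_
    have h₁ : ContDiffOn ℝ n (deriv A) I := contDiffOn_of_contDiffOn_deriv (n := n) hI hA₁ h₂
    have h₀ : ContDiffOn ℝ n A I := contDiffOn_of_contDiffOn_deriv (n := n) hI hA₀ h₁
    refine ContDiffOn.congr (ContDiffOn.div (by fun_prop) (by fun_prop) fun u hu ↦ ?_) hA₃
    exact mul_ne_zero four_ne_zero (hAnz u hu)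
  exact contDiffOn_of_contDiffOn_deriv hI hA₀ (contDiffOn_of_contDiffOn_deriv hI hA₁ hsmooth₂)

theorem mul_deriv_abs_rpow (r : ℝ) (hf : DifferentiableAt ℝ f u) (hfu : f u ≠ 0) :
    f u * deriv (fun x ↦ |f x| ^ r) u = r * deriv f u * |f u| ^ r := by
  have habs : HasDerivAt (fun x ↦ |f x|) (SignType.sign (f u) * deriv f u) u :=
    (hasDerivAt_abs hfu).comp u hf.hasDerivAt
  rw [(habs.rpow_const (Or.inl (abs_ne_zero.2 hfu))).deriv, Real.rpow_sub_one (abs_ne_zero.2 hfu)]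
  calc f u * (SignType.sign (f u) * deriv f u * r * (|f u| ^ r / |f u|))
      = (f u * SignType.sign (f u)) / |f u| * (r * deriv f u * |f u| ^ r) := by ring
    _ = r * deriv f u * |f u| ^ r := by
      rw [self_mul_sign, div_self (abs_ne_zero.2 hfu), one_mul]

theorem contDiffOn_abs_rpow {n : ℕ∞} (r : ℝ) (hf : ContDiffOn ℝ n f I)
    (hfI : ∀ u ∈ I, f u ≠ 0) : ContDiffOn ℝ n (fun x ↦ |f x| ^ r) I :=
  (hf.abs hfI).rpow_const_of_ne fun u hu ↦ abs_ne_zero.2 (hfI u hu)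

theorem sq_mul_deriv_deriv_abs_rpow (r : ℝ) (hI : IsOpen I) (hf : ContDiffOn ℝ 2 f I)
    (hfI : ∀ u ∈ I, f u ≠ 0) (hu : u ∈ I) :
    f u ^ 2 * deriv (deriv fun x ↦ |f x| ^ r) u =
      r * (f u * deriv (deriv f) u + (r - 1) * deriv f u ^ 2) * |f u| ^ r := by
  have hdiff : ∀ {g : ℝ → ℝ}, ContDiffOn ℝ 2 g I →
      ∀ x ∈ I, DifferentiableAt ℝ g x ∧ DifferentiableAt ℝ (deriv g) x := fun hg x hx ↦
    ⟨(hg.differentiableOn two_ne_zero).differentiableAt (hI.mem_nhds hx),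
      ((hg.deriv_of_isOpen (m := 1) hI (by norm_num)).differentiableOn one_ne_zero).differentiableAt
        (hI.mem_nhds hx)⟩
  have hpow : ContDiffOn ℝ 2 (fun x ↦ |f x| ^ r) I := contDiffOn_abs_rpow (n := 2) r hf hfI
  refine sq_mul_deriv_deriv_of_mul_deriv_eq (hdiff hf u hu).1 (hdiff hf u hu).2
    (hdiff hpow u hu).1 (hdiff hpow u hu).2 ?_
  filter_upwards [hI.mem_nhds hu] with x hx
  exact mul_deriv_abs_rpow r (hdiff hf x hx).1 (hfI x hx)

/-- The function `Γ = |A'|^{-1/4}` determined by the profile `A` of a plane wave, from which `K₈`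
is built. -/
def profileGamma (A : ℝ → ℝ) : ℝ → ℝ := fun u ↦ |deriv A u| ^ (-(1 : ℝ) / 4)

theorem four_mul_deriv_mul_deriv_profileGamma (hA₁ : DifferentiableAt ℝ (deriv A) u)
    (hAnz : deriv A u ≠ 0) :
    4 * deriv A u * deriv (profileGamma A) u + deriv (deriv A) u * profileGamma A u = 0 := by
  have hlog : deriv A u * deriv (profileGamma A) u =
      -1 / 4 * deriv (deriv A) u * profileGamma A u := mul_deriv_abs_rpow _ hA₁ hAnz
  linear_combination 4 * hlog

theorem deriv_deriv_profileGamma (hI : IsOpen I) (hA₁ : ContDiffOn ℝ 2 (deriv A) I)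
    (hAnz : ∀ u ∈ I, deriv A u ≠ 0) (hu : u ∈ I)
    (hode : 5 * (deriv (deriv A) u) ^ 2 - 4 * deriv A u * deriv (deriv (deriv A)) u
        + 16 * A u * (deriv A u) ^ 2 = 0) :
    deriv (deriv (profileGamma A)) u + A u * profileGamma A u = 0 := by
  have hsecond : deriv A u ^ 2 * deriv (deriv (profileGamma A)) u =
      -1 / 4 * (deriv A u * deriv (deriv (deriv A)) u + (-1 / 4 - 1) * deriv (deriv A) u ^ 2)
        * profileGamma A u := sq_mul_deriv_deriv_abs_rpow _ hI hA₁ hAnz hu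
  refine (mul_eq_zero_iff_left (pow_ne_zero 2 (hAnz u hu))).1 ?_
  linear_combination hsecond + 1 / 16 * profileGamma A u * hode

end ProfileEquation

section PartialDerivatives

variable {i : Fin 4} {f g : Pt → ℝ} {p : Pt}

theorem pd_const (c : ℝ) : pd i (fun _ ↦ c) p = 0 := by simp [pd]

theorem pd_coord (j : Fin 4) : pd i (fun q ↦ q j) p = kd j i := by
  rw [pd, (hasFDerivAt_apply j p).fderiv]
  simp [kd, Pi.single_apply]

theorem pd_neg : pd i (fun q ↦ -f q) p = -pd i f p := by simp [pd]

theorem pd_add (hf : DifferentiableAt ℝ f p) (hg : DifferentiableAt ℝ g p) :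
    pd i (fun q ↦ f q + g q) p = pd i f p + pd i g p := by
  simp [pd, fderiv_fun_add hf hg]

theorem pd_sub (hf : DifferentiableAt ℝ f p) (hg : DifferentiableAt ℝ g p) :
    pd i (fun q ↦ f q - g q) p = pd i f p - pd i g p := by
  simp [pd, fderiv_fun_sub hf hg]

theorem pd_mul (hf : DifferentiableAt ℝ f p) (hg : DifferentiableAt ℝ g p) :
    pd i (fun q ↦ f q * g q) p = f p * pd i g p + g p * pd i f p := by
  simp [pd, fderiv_fun_mul hf hg]

theorem pd_pow (hf : DifferentiableAt ℝ f p) (n : ℕ) :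
    pd i (fun q ↦ f q ^ n) p = n * f p ^ (n - 1) * pd i f p := by
  simp [pd, fderiv_fun_pow n hf]

theorem pd_div_const (hf : DifferentiableAt ℝ f p) (c : ℝ) :
    pd i (fun q ↦ f q / c) p = pd i f p / c := by
  simp [div_eq_mul_inv, pd_mul hf (differentiableAt_const _), pd_const, mul_comm]

theorem pd_comp_coord {φ : ℝ → ℝ} {j : Fin 4} (hφ : DifferentiableAt ℝ φ (p j)) :
    pd i (fun q ↦ φ (q j)) p = deriv φ (p j) * kd j i := by
  have hcoord : HasFDerivAt (fun q : Pt ↦ q j) (ContinuousLinearMap.proj j : Pt →L[ℝ] ℝ) p :=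
    hasFDerivAt_apply j p
  have hcomp : HasFDerivAt (fun q : Pt ↦ φ (q j)) _ p := hφ.hasDerivAt.comp_hasFDerivAt p hcoord
  rw [pd, hcomp.fderiv]
  simp [kd, Pi.single_apply]

end PartialDerivatives

section PPWave

theorem kd_self (i : Fin 4) : kd i i = 1 := if_pos rfl

theorem kd_of_ne {i j : Fin 4} (h : i ≠ j) : kd i j = 0 := if_neg h

theorem sum_Gamma_mul (H : Pt → ℝ) (p : Pt) (a b : Fin 4) (X : Fin 4 → ℝ) :
    ∑ d, Gamma H p d a b * X d =
      (pd 0 H p * X 1 + pd 2 H p * X 2 + pd 3 H p * X 3) * (kd 0 a * kd 0 b)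
        + pd 2 H p * X 1 * (kd 0 a * kd 2 b + kd 2 a * kd 0 b)
        + pd 3 H p * X 1 * (kd 0 a * kd 3 b + kd 3 a * kd 0 b) := by
  fin_cases a <;> fin_cases b <;> simp [Fin.sum_univ_four, Gamma, kd]

theorem covD2_cyclic_sum (H : Pt → ℝ) {T : Pt → Fin 4 → Fin 4 → ℝ} {p : Pt}
    (hT : ∀ a b, T p a b = T p b a) (a b c : Fin 4) :
    covD2 H T p c a b + covD2 H T p a b c + covD2 H T p b c a =
      pd c (fun q ↦ T q a b) p + pd a (fun q ↦ T q b c) p + pd b (fun q ↦ T q c a) p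
        - 2 * (∑ d, Gamma H p d a b * T p d c + ∑ d, Gamma H p d b c * T p d a
          + ∑ d, Gamma H p d c a * T p d b) := by
  simp only [covD2, hT a, hT b, hT c, sum_Gamma_mul]
  ring

end PPWave

section ConformallyFlat

/-- The function `H` of the conformally flat plane wave `2H = A(u)(y² + z²)`. -/
def planeWaveProfile (A : ℝ → ℝ) : Pt → ℝ := fun p ↦ A (p 0) * ((p 2) ^ 2 + (p 3) ^ 2) / 2

variable {A G : ℝ → ℝ} {p : Pt}

theorem pd_planeWaveProfile (hA : DifferentiableAt ℝ A (p 0)) (i : Fin 4) :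
    pd i (planeWaveProfile A) p =
      deriv A (p 0) * (p 2 ^ 2 + p 3 ^ 2) / 2 * kd 0 i
        + A (p 0) * (p 2 * kd 2 i + p 3 * kd 3 i) := by
  have hA' : DifferentiableAt ℝ (fun q : Pt ↦ A (q 0)) p := by fun_prop
  unfold planeWaveProfile
  simp (disch := first | assumption | fun_prop) only
    [pd_div_const, pd_mul, pd_add, pd_pow, pd_comp_coord, pd_coord]
  push_cast
  ring

theorem sd_comm (i j a b : Fin 4) : sd i j a b = sd i j b a := by
  unfold sd
  ring

theorem KTeight_symm (A G : ℝ → ℝ) (p : Pt) (a b : Fin 4) :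
    KTeight A G p a b = KTeight A G p b a := by
  simp only [KTeight, sd_comm _ _ a b]

theorem KTeight_v (A G : ℝ → ℝ) (p : Pt) (b : Fin 4) :
    KTeight A G p 1 b = -deriv G (p 0) * p 2 * kd 0 b + G (p 0) * kd 2 b := by
  simp (disch := decide) only [KTeight, sd, kd_self, kd_of_ne]
  ring

theorem KTeight_y (A G : ℝ → ℝ) (p : Pt) (b : Fin 4) :
    KTeight A G p 2 b =
      1 / 3 * A (p 0) * G (p 0) * (3 * p 2 ^ 2 + 2 * p 3 ^ 2) * kd 0 b + G (p 0) * kd 1 b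
        - 1 / 3 * deriv G (p 0) * p 3 * kd 3 b := by
  simp (disch := decide) only [KTeight, sd, kd_self, kd_of_ne]
  ring

theorem KTeight_z (A G : ℝ → ℝ) (p : Pt) (b : Fin 4) :
    KTeight A G p 3 b =
      1 / 3 * A (p 0) * G (p 0) * p 2 * p 3 * kd 0 b - 1 / 3 * deriv G (p 0) * p 3 * kd 2 b
        + 2 / 3 * deriv G (p 0) * p 2 * kd 3 b := by
  simp (disch := decide) only [KTeight, sd, kd_self, kd_of_ne]
  ring

theorem pd_KTeight (hA : DifferentiableAt ℝ A (p 0)) (hA₁ : DifferentiableAt ℝ (deriv A) (p 0))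
    (hG : DifferentiableAt ℝ G (p 0)) (hG₁ : DifferentiableAt ℝ (deriv G) (p 0))
    (i a b : Fin 4) :
    pd i (fun q ↦ KTeight A G q a b) p =
      (-(2 * (deriv A (p 0) * deriv G (p 0) + A (p 0) * deriv (deriv G) (p 0))
            + 1 / 3 * (deriv (deriv A) (p 0) * G (p 0) + deriv A (p 0) * deriv G (p 0)))
              * p 2 * (p 2 ^ 2 + p 3 ^ 2) * sd 0 0 a b
          - 2 * deriv (deriv G) (p 0) * p 2 * sd 0 1 a b
          + 2 / 3 * (deriv A (p 0) * G (p 0) + A (p 0) * deriv G (p 0))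
            * ((3 * p 2 ^ 2 + 2 * p 3 ^ 2) * sd 0 2 a b + p 2 * p 3 * sd 0 3 a b)
          + 2 * deriv G (p 0) * sd 1 2 a b
          + 2 / 3 * deriv (deriv G) (p 0) * (p 2 * sd 3 3 a b - p 3 * sd 2 3 a b)) * kd 0 i
        + (-(2 * A (p 0) * deriv G (p 0) + 1 / 3 * deriv A (p 0) * G (p 0))
            * (3 * p 2 ^ 2 + p 3 ^ 2) * sd 0 0 a b
          - 2 * deriv G (p 0) * sd 0 1 a b
          + 2 / 3 * A (p 0) * G (p 0) * (6 * p 2 * sd 0 2 a b + p 3 * sd 0 3 a b)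
          + 2 / 3 * deriv G (p 0) * sd 3 3 a b) * kd 2 i
        + (-(2 * A (p 0) * deriv G (p 0) + 1 / 3 * deriv A (p 0) * G (p 0))
            * (2 * p 2 * p 3) * sd 0 0 a b
          + 2 / 3 * A (p 0) * G (p 0) * (4 * p 3 * sd 0 2 a b + p 2 * sd 0 3 a b)
          - 2 / 3 * deriv G (p 0) * sd 2 3 a b) * kd 3 i := by
  unfold KTeight
  simp (disch := first | assumption | fun_prop) only
    [pd_const, pd_neg, pd_mul, pd_add, pd_sub, pd_pow, pd_comp_coord, pd_coord]
  push_cast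
  ring

theorem covD2_KTeight_cyclic_sum (hA : DifferentiableAt ℝ A (p 0))
    (hA₁ : DifferentiableAt ℝ (deriv A) (p 0)) (hG : DifferentiableAt ℝ G (p 0))
    (hG₁ : DifferentiableAt ℝ (deriv G) (p 0))
    (hGA : deriv (deriv G) (p 0) + A (p 0) * G (p 0) = 0) (a b c : Fin 4) :
    covD2 (planeWaveProfile A) (KTeight A G) p c a b
        + covD2 (planeWaveProfile A) (KTeight A G) p a b c
        + covD2 (planeWaveProfile A) (KTeight A G) p b c a =
      -(4 * deriv A (p 0) * deriv G (p 0) + deriv (deriv A) (p 0) * G (p 0))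
        * p 2 * (p 2 ^ 2 + p 3 ^ 2) * (kd 0 a * kd 0 b * kd 0 c) := by
  rw [covD2_cyclic_sum _ (KTeight_symm A G p)]
  simp only [pd_KTeight hA hA₁ hG hG₁, sum_Gamma_mul, KTeight_v, KTeight_y, KTeight_z,
    pd_planeWaveProfile hA, eq_neg_of_add_eq_zero_left hGA, sd]
  simp (disch := decide) only [kd_self, kd_of_ne]
  -- The two sides agree as polynomials in `kd i a`, `kd i b`, `kd i c`: no case split is needed.
  ring

theorem contDiffAt_KTeight {n : WithTop ℕ∞} (hA : ContDiffAt ℝ n A (p 0))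
    (hA₁ : ContDiffAt ℝ n (deriv A) (p 0)) (hG : ContDiffAt ℝ n G (p 0))
    (hG₁ : ContDiffAt ℝ n (deriv G) (p 0)) (a b : Fin 4) :
    ContDiffAt ℝ n (fun q ↦ KTeight A G q a b) p := by
  unfold KTeight
  fun_prop

theorem isKillingTensor_KTeight {I : Set ℝ} (hI : IsOpen I) (hA : ContDiffOn ℝ ∞ A I)
    (hG : ContDiffOn ℝ ∞ G I) (hGA : ∀ u ∈ I, deriv (deriv G) u + A u * G u = 0)
    (hAG : ∀ u ∈ I, 4 * deriv A u * deriv G u + deriv (deriv A) u * G u = 0) :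
    IsKillingTensor (planeWaveProfile A) {p | p 0 ∈ I} (KTeight A G) := by
  have hA₁ : ContDiffOn ℝ ∞ (deriv A) I := hA.deriv_of_isOpen hI (by simp)
  have hG₁ : ContDiffOn ℝ ∞ (deriv G) I := hG.deriv_of_isOpen hI (by simp)
  have hcont {φ : ℝ → ℝ} (hφ : ContDiffOn ℝ ∞ φ I) {u : ℝ} (hu : u ∈ I) : ContDiffAt ℝ ∞ φ u :=
    hφ.contDiffAt (hI.mem_nhds hu)
  have hdiff {φ : ℝ → ℝ} (hφ : ContDiffOn ℝ ∞ φ I) {u : ℝ} (hu : u ∈ I) :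
      DifferentiableAt ℝ φ u := (hcont hφ hu).differentiableAt (by simp)
  refine ⟨fun a b p hp ↦ ?_, KTeight_symm A G, fun p hp a b c ↦ ?_⟩
  · exact (contDiffAt_KTeight (hcont hA hp) (hcont hA₁ hp) (hcont hG hp) (hcont hG₁ hp)
      a b).contDiffWithinAt
  · rw [covD2_KTeight_cyclic_sum (hdiff hA hp) (hdiff hA₁ hp) (hdiff hG hp) (hdiff hG₁ hp)
      (hGA _ hp), hAG _ hp]
    ring

end ConformallyFlat

theorem stmt18_general {I : Set ℝ} (hI : IsOpen I) {A : ℝ → ℝ}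
    (hA₁ : DifferentiableOn ℝ (deriv A) I) (hA₂ : DifferentiableOn ℝ (deriv (deriv A)) I)
    (hAnz : ∀ u ∈ I, deriv A u ≠ 0)
    (hode : ∀ u ∈ I,
      5 * (deriv (deriv A) u) ^ 2 - 4 * deriv A u * deriv (deriv (deriv A)) u
        + 16 * A u * (deriv A u) ^ 2 = 0) :
    (∀ u ∈ I, deriv (deriv (profileGamma A)) u + A u * profileGamma A u = 0) ∧
      IsKillingTensor (planeWaveProfile A) {p | p 0 ∈ I} (KTeight A (profileGamma A)) := by
  have hA : ContDiffOn ℝ ∞ A I := contDiffOn_infty_of_profile_ode hI hA₁ hA₂ hAnz hode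
  have hA' : ContDiffOn ℝ ∞ (deriv A) I := hA.deriv_of_isOpen hI (by simp)
  have hΓ : ContDiffOn ℝ ∞ (profileGamma A) I := contDiffOn_abs_rpow _ hA' hAnz
  have hΓA : ∀ u ∈ I, deriv (deriv (profileGamma A)) u + A u * profileGamma A u = 0 := fun u hu ↦
    deriv_deriv_profileGamma hI (contDiffOn_infty.1 hA' 2) hAnz hu (hode u hu)
  refine ⟨hΓA, isKillingTensor_KTeight hI hA hΓ hΓA fun u hu ↦ ?_⟩
  exact four_mul_deriv_mul_deriv_profileGamma (hA₁.differentiableAt (hI.mem_nhds hu)) (hAnz u hu)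

/-- If `A` is `C³` on an open interval `I` with `A' ≠ 0` and satisfies
`5 (A'')² - 4 A' A''' + 16 A (A')² = 0`, then `Γ = |A'|^{-1/4}` satisfies `Γ'' + AΓ = 0`
and the tensor field `K₈` built from `A` and `Γ` is a Killing tensor of the conformally
flat plane wave `2H = A(u)(y² + z²)` on `I × ℝ³`. -/
theorem stmt18 (I : Set ℝ) (hIopen : IsOpen I) (hIconn : I.OrdConnected)
    (A : ℝ → ℝ) (hA : ContDiffOn ℝ 3 A I) (hAnz : ∀ u ∈ I, deriv A u ≠ 0)
    (hode : ∀ u ∈ I,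
      5 * (deriv (deriv A) u) ^ 2 - 4 * deriv A u * deriv (deriv (deriv A)) u
        + 16 * A u * (deriv A u) ^ 2 = 0) :
    let Γf : ℝ → ℝ := fun u => |deriv A u| ^ (-(1 : ℝ) / 4)
    let U : Set Pt := {p | p 0 ∈ I}
    let H : Pt → ℝ := fun p => A (p 0) * ((p 2) ^ 2 + (p 3) ^ 2) / 2
    (∀ u ∈ I, deriv (deriv Γf) u + A u * Γf u = 0) ∧
    IsKillingTensor H U (KTeight A Γf) :=
  have hA₁ : ContDiffOn ℝ 2 (deriv A) I := hA.deriv_of_isOpen hIopen (by norm_num)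
  have hA₂ : ContDiffOn ℝ 1 (deriv (deriv A)) I := hA₁.deriv_of_isOpen hIopen (by norm_num)
  stmt18_general hIopen (hA₁.differentiableOn two_ne_zero) (hA₂.differentiableOn one_ne_zero)
    hAnz hode

end
end
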